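/- arXiv:1601.07979 — 4 statements merged into one kernel-verified Lean document; each statement's English description precedes it below -/
import Mathlib

section
/- Let (H, α_H) be a Hom-bialgebra over a field k, let i, j, m ∈ ℤ, and let (U,α_U), (V,α_V), (W,α_W) be Hom-Long dimodules over H. Define ξ_{X,Y} : X⊗Y → X⊗Y by ξ_{X,Y}(x⊗y) = α_X^{-1}(x)·α_H^{m}(y₍₁₎) ⊗ α_Y^{-1}(y₍₀₎) for Hom-Long dimodules X,Y (where ρ(y) = y₍₀₎⊗y₍₁₎), and define the associativity constraint a_{X,Y,Z} : (X⊗Y)⊗Z → X⊗(Y⊗Z) by a_{X,Y,Z}((x⊗y)⊗z) = α_X^{i+1}(x) ⊗ (y ⊗ α_Z^{-j-1}(z)). Then the following generalized Hom-type D-equation holds as an equality of linear maps (U⊗V)⊗W → (U⊗V)⊗W: (ξ_{U,V}⊗id_W) ∘ a_{U,V,W}^{-1} ∘ (id_U⊗ξ_{V,W}) ∘ a_{U,V,W} = a_{U,V,W}^{-1} ∘ (id_U⊗ξ_{V,W}) ∘ a_{U,V,W} ∘ (ξ_{U,V}⊗id_W). -/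
open TensorProduct BigOperators

noncomputable section

variable (k : Type*) [Field k]

section HomDefs

variable {A B C H U X Y Z : Type*}
variable [AddCommGroup A] [Module k A] [AddCommGroup B] [Module k B]
variable [AddCommGroup C] [Module k C] [AddCommGroup H] [Module k H]
variable [AddCommGroup U] [Module k U] [AddCommGroup X] [Module k X]
variable [AddCommGroup Y] [Module k Y] [AddCommGroup Z] [Module k Z]

/-- A Hom-algebra `(A, α, μ, e)` over `k`. -/
def IsHomAlgebra (α : A ≃ₗ[k] A) (μ : A →ₗ[k] A →ₗ[k] A) (e : A) : Prop :=
  (∀ a b, α (μ a b) = μ (α a) (α b)) ∧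
  (∀ a b c, μ (α a) (μ b c) = μ (μ a b) (α c)) ∧
  α e = e ∧ (∀ a, μ e a = α a) ∧ (∀ a, μ a e = α a)

/-- A Hom-coalgebra `(C, α, Δ, ε)` over `k`. -/
def IsHomCoalgebra (α : C ≃ₗ[k] C) (Δ : C →ₗ[k] C ⊗[k] C) (ε : C →ₗ[k] k) : Prop :=
  (∀ c, Δ (α c) = TensorProduct.map α.toLinearMap α.toLinearMap (Δ c)) ∧
  (∀ c, ε (α c) = ε c) ∧
  (∀ c, TensorProduct.map α.toLinearMap Δ (Δ c)
      = TensorProduct.assoc k C C C (TensorProduct.map Δ α.toLinearMap (Δ c))) ∧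
  (∀ c, TensorProduct.lid k C (TensorProduct.map ε (LinearMap.id : C →ₗ[k] C) (Δ c)) = α c) ∧
  (∀ c, TensorProduct.rid k C (TensorProduct.map (LinearMap.id : C →ₗ[k] C) ε (Δ c)) = α c)

/-- A Hom-bialgebra `(H, α, μ, e, Δ, ε)` over `k`. -/
def IsHomBialgebra (α : H ≃ₗ[k] H) (μ : H →ₗ[k] H →ₗ[k] H) (e : H)
    (Δ : H →ₗ[k] H ⊗[k] H) (ε : H →ₗ[k] k) : Prop :=
  IsHomAlgebra k α μ e ∧ IsHomCoalgebra k α Δ ε ∧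
  (∀ a b, Δ (μ a b) = TensorProduct.map (TensorProduct.lift μ) (TensorProduct.lift μ)
      (TensorProduct.tensorTensorTensorComm k H H H H (Δ a ⊗ₜ[k] Δ b))) ∧
  Δ e = e ⊗ₜ[k] e ∧
  (∀ a b, ε (μ a b) = ε a * ε b) ∧
  ε e = 1

/-- A right `A`-Hom-module `(U, αU, act)`. -/
def IsHomModule (αA : A ≃ₗ[k] A) (μ : A →ₗ[k] A →ₗ[k] A) (e : A)
    (αU : U ≃ₗ[k] U) (act : U →ₗ[k] A →ₗ[k] U) : Prop :=
  (∀ u a, αU (act u a) = act (αU u) (αA a)) ∧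
  (∀ u, act u e = αU u) ∧
  (∀ u a b, act (act u a) (αA b) = act (αU u) (μ a b))

/-- A right `H`-Hom-comodule `(U, αU, ρ)`. -/
def IsHomComodule (αH : H ≃ₗ[k] H) (Δ : H →ₗ[k] H ⊗[k] H) (ε : H →ₗ[k] k)
    (αU : U ≃ₗ[k] U) (ρ : U →ₗ[k] U ⊗[k] H) : Prop :=
  (∀ u, ρ (αU u) = TensorProduct.map αU.toLinearMap αH.toLinearMap (ρ u)) ∧
  (∀ u, TensorProduct.map αU.toLinearMap Δ (ρ u)
      = TensorProduct.assoc k U H H (TensorProduct.map ρ αH.toLinearMap (ρ u))) ∧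
  (∀ u, TensorProduct.rid k U (TensorProduct.map (LinearMap.id : U →ₗ[k] U) ε (ρ u)) = αU u)

/-- A Hom-cotwistor `φ : B ⊗ H → H ⊗ B` between Hom-coalgebras `B` and `H`
(conditions (M1)-(M4) together with compatibility with the structure maps). -/
def IsHomCotwistor (αB : B ≃ₗ[k] B) (ΔB : B →ₗ[k] B ⊗[k] B) (εB : B →ₗ[k] k)
    (αH : H ≃ₗ[k] H) (ΔH : H →ₗ[k] H ⊗[k] H) (εH : H →ₗ[k] k)
    (φ : B ⊗[k] H →ₗ[k] H ⊗[k] B) : Prop :=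
  (φ ∘ₗ TensorProduct.map αB.toLinearMap αH.toLinearMap
     = TensorProduct.map αH.toLinearMap αB.toLinearMap ∘ₗ φ) ∧
  -- (M1)
  (TensorProduct.map αH.toLinearMap ΔB ∘ₗ φ
     = (TensorProduct.assoc k H B B).toLinearMap
       ∘ₗ TensorProduct.map φ (LinearMap.id : B →ₗ[k] B)
       ∘ₗ (TensorProduct.assoc k B H B).symm.toLinearMap
       ∘ₗ TensorProduct.map (LinearMap.id : B →ₗ[k] B) φ
       ∘ₗ (TensorProduct.assoc k B B H).toLinearMap
       ∘ₗ TensorProduct.map ΔB αH.toLinearMap) ∧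
  -- (M2)
  (TensorProduct.map ΔH αB.toLinearMap ∘ₗ φ
     = (TensorProduct.assoc k H H B).symm.toLinearMap
       ∘ₗ TensorProduct.map (LinearMap.id : H →ₗ[k] H) φ
       ∘ₗ (TensorProduct.assoc k H B H).toLinearMap
       ∘ₗ TensorProduct.map φ (LinearMap.id : H →ₗ[k] H)
       ∘ₗ (TensorProduct.assoc k B H H).symm.toLinearMap
       ∘ₗ TensorProduct.map αB.toLinearMap ΔH) ∧
  -- (M3)
  ((TensorProduct.lid k B).toLinearMap
      ∘ₗ TensorProduct.map εH (LinearMap.id : B →ₗ[k] B) ∘ₗ φ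
     = (TensorProduct.rid k B).toLinearMap
        ∘ₗ TensorProduct.map (LinearMap.id : B →ₗ[k] B) εH) ∧
  -- (M4)
  ((TensorProduct.rid k H).toLinearMap
      ∘ₗ TensorProduct.map (LinearMap.id : H →ₗ[k] H) εB ∘ₗ φ
     = (TensorProduct.lid k H).toLinearMap
        ∘ₗ TensorProduct.map εB (LinearMap.id : H →ₗ[k] H))

/-- A monoidal Hom-cotwistor between Hom-bialgebras `B` and `H`:
a Hom-cotwistor additionally satisfying (M5) and (M6). -/
def IsMonoidalHomCotwistor (αB : B ≃ₗ[k] B) (μB : B →ₗ[k] B →ₗ[k] B) (eB : B)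
    (ΔB : B →ₗ[k] B ⊗[k] B) (εB : B →ₗ[k] k)
    (αH : H ≃ₗ[k] H) (μH : H →ₗ[k] H →ₗ[k] H) (eH : H)
    (ΔH : H →ₗ[k] H ⊗[k] H) (εH : H →ₗ[k] k)
    (φ : B ⊗[k] H →ₗ[k] H ⊗[k] B) : Prop :=
  IsHomCotwistor k αB ΔB εB αH ΔH εH φ ∧
  -- (M5)
  (TensorProduct.map (TensorProduct.lift μH) (TensorProduct.lift μB)
      ∘ₗ (TensorProduct.tensorTensorTensorComm k H B H B).toLinearMap
      ∘ₗ TensorProduct.map φ φ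
    = φ ∘ₗ TensorProduct.map (TensorProduct.lift μB) (TensorProduct.lift μH)
        ∘ₗ (TensorProduct.tensorTensorTensorComm k B H B H).toLinearMap) ∧
  -- (M6)
  φ (eB ⊗ₜ[k] eH) = eH ⊗ₜ[k] eB

/-- A Hom-entwining map `Φ : H ⊗ A → A ⊗ H` (conditions (E1)-(E4) together
with compatibility with the structure maps); `(H, A, Φ)` is then a
Hom-entwining structure. -/
def IsHomEntwining (αA : A ≃ₗ[k] A) (μ : A →ₗ[k] A →ₗ[k] A) (e : A)
    (αH : H ≃ₗ[k] H) (Δ : H →ₗ[k] H ⊗[k] H) (ε : H →ₗ[k] k)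
    (Φ : H ⊗[k] A →ₗ[k] A ⊗[k] H) : Prop :=
  (TensorProduct.map αA.toLinearMap αH.toLinearMap ∘ₗ Φ
     = Φ ∘ₗ TensorProduct.map αH.toLinearMap αA.toLinearMap) ∧
  -- (E1)
  (TensorProduct.map (TensorProduct.lift μ) αH.toLinearMap
      ∘ₗ (TensorProduct.assoc k A A H).symm.toLinearMap
      ∘ₗ TensorProduct.map (LinearMap.id : A →ₗ[k] A) Φ
      ∘ₗ (TensorProduct.assoc k A H A).toLinearMap
      ∘ₗ TensorProduct.map Φ (LinearMap.id : A →ₗ[k] A)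
    = Φ ∘ₗ TensorProduct.map αH.toLinearMap (TensorProduct.lift μ)
        ∘ₗ (TensorProduct.assoc k H A A).toLinearMap) ∧
  -- (E2)
  (TensorProduct.map αA.toLinearMap Δ ∘ₗ Φ
     = (TensorProduct.assoc k A H H).toLinearMap
       ∘ₗ TensorProduct.map Φ (LinearMap.id : H →ₗ[k] H)
       ∘ₗ (TensorProduct.assoc k H A H).symm.toLinearMap
       ∘ₗ TensorProduct.map (LinearMap.id : H →ₗ[k] H) Φ
       ∘ₗ (TensorProduct.assoc k H H A).toLinearMap
       ∘ₗ TensorProduct.map Δ αA.toLinearMap) ∧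
  -- (E3)
  ((TensorProduct.rid k A).toLinearMap
      ∘ₗ TensorProduct.map (LinearMap.id : A →ₗ[k] A) ε ∘ₗ Φ
     = (TensorProduct.lid k A).toLinearMap
        ∘ₗ TensorProduct.map ε (LinearMap.id : A →ₗ[k] A)) ∧
  -- (E4)
  (∀ h, Φ (h ⊗ₜ[k] e) = e ⊗ₜ[k] h)

/-- A Hom-monoidal entwining datum between Hom-bialgebras `H` (coalgebra side)
and `A` (algebra side): a Hom-entwining map additionally satisfying (E5), (E6). -/
def IsHomMonoidalEntwining (αA : A ≃ₗ[k] A) (μA : A →ₗ[k] A →ₗ[k] A) (eA : A)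
    (ΔA : A →ₗ[k] A ⊗[k] A) (εA : A →ₗ[k] k)
    (αH : H ≃ₗ[k] H) (μH : H →ₗ[k] H →ₗ[k] H) (eH : H)
    (ΔH : H →ₗ[k] H ⊗[k] H) (εH : H →ₗ[k] k)
    (Φ : H ⊗[k] A →ₗ[k] A ⊗[k] H) : Prop :=
  IsHomEntwining k αA μA eA αH ΔH εH Φ ∧
  -- (E5)
  (TensorProduct.map (LinearMap.id : A ⊗[k] A →ₗ[k] A ⊗[k] A) (TensorProduct.lift μH)
      ∘ₗ (TensorProduct.tensorTensorTensorComm k A H A H).toLinearMap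
      ∘ₗ TensorProduct.map Φ Φ
      ∘ₗ (TensorProduct.tensorTensorTensorComm k H H A A).toLinearMap
      ∘ₗ TensorProduct.map
           (TensorProduct.map (αH.toLinearMap ∘ₗ αH.toLinearMap)
             (αH.toLinearMap ∘ₗ αH.toLinearMap)) ΔA
    = TensorProduct.map ΔA (αH.toLinearMap ∘ₗ αH.toLinearMap)
        ∘ₗ Φ ∘ₗ TensorProduct.map (TensorProduct.lift μH) (LinearMap.id : A →ₗ[k] A)) ∧
  -- (E6)
  (∀ a, TensorProduct.lid k H
      (TensorProduct.map εA (LinearMap.id : H →ₗ[k] H) (Φ (eH ⊗ₜ[k] a))) = εA a • eH)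

/-- An `n`-th Hom-entwined module over a Hom-entwining structure `(H, A, Φ)`. -/
def IsHomEntwinedModule (αA : A ≃ₗ[k] A) (μ : A →ₗ[k] A →ₗ[k] A) (e : A)
    (αH : H ≃ₗ[k] H) (Δ : H →ₗ[k] H ⊗[k] H) (ε : H →ₗ[k] k)
    (Φ : H ⊗[k] A →ₗ[k] A ⊗[k] H) (n : ℤ)
    (αU : U ≃ₗ[k] U) (act : U →ₗ[k] A →ₗ[k] U) (ρ : U →ₗ[k] U ⊗[k] H) : Prop :=
  IsHomModule k αA μ e αU act ∧
  IsHomComodule k αH Δ ε αU ρ ∧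
  ∀ u a, ρ (act u a)
    = TensorProduct.map
        (TensorProduct.lift act ∘ₗ
          TensorProduct.map (LinearMap.id : U →ₗ[k] U) αA.toLinearMap)
        ((αH ^ (-n)).toLinearMap)
        ((TensorProduct.assoc k U A H).symm
          (TensorProduct.map (LinearMap.id : U →ₗ[k] U)
            (Φ ∘ₗ TensorProduct.map ((αH ^ (n + 1)).toLinearMap)
               (LinearMap.id : A →ₗ[k] A))
            (TensorProduct.assoc k U H A (ρ u ⊗ₜ[k] a))))

/-- A Hom-Long dimodule over a Hom-bialgebra `H`. -/
def IsHomLongDimodule (αH : H ≃ₗ[k] H) (μ : H →ₗ[k] H →ₗ[k] H) (e : H)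
    (Δ : H →ₗ[k] H ⊗[k] H) (ε : H →ₗ[k] k)
    (αU : U ≃ₗ[k] U) (act : U →ₗ[k] H →ₗ[k] U) (ρ : U →ₗ[k] U ⊗[k] H) : Prop :=
  IsHomModule k αH μ e αU act ∧
  IsHomComodule k αH Δ ε αU ρ ∧
  ∀ u h, ρ (act u h)
    = TensorProduct.map (TensorProduct.lift act) αH.toLinearMap
        ((TensorProduct.assoc k U H H).symm
          (TensorProduct.map (LinearMap.id : U →ₗ[k] U)
            (TensorProduct.comm k H H).toLinearMap
            (TensorProduct.assoc k U H H (ρ u ⊗ₜ[k] αH h))))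

/-- A right `H`-comodule algebra over a Hom-bialgebra `H`. -/
def IsHomComoduleAlgebra (αH : H ≃ₗ[k] H) (μH : H →ₗ[k] H →ₗ[k] H) (eH : H)
    (ΔH : H →ₗ[k] H ⊗[k] H) (εH : H →ₗ[k] k)
    (αA : A ≃ₗ[k] A) (μA : A →ₗ[k] A →ₗ[k] A) (eA : A)
    (ρA : A →ₗ[k] A ⊗[k] H) : Prop :=
  IsHomAlgebra k αA μA eA ∧
  IsHomComodule k αH ΔH εH αA ρA ∧
  (∀ a b, ρA (μA a b) = TensorProduct.map (TensorProduct.lift μA) (TensorProduct.lift μH)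
      (TensorProduct.tensorTensorTensorComm k A H A H (ρA a ⊗ₜ[k] ρA b))) ∧
  ρA eA = eA ⊗ₜ[k] eH

/-- A right `H`-module coalgebra over a Hom-bialgebra `H`. -/
def IsHomModuleCoalgebra (αH : H ≃ₗ[k] H) (μH : H →ₗ[k] H →ₗ[k] H) (eH : H)
    (ΔH : H →ₗ[k] H ⊗[k] H) (εH : H →ₗ[k] k)
    (αC : C ≃ₗ[k] C) (ΔC : C →ₗ[k] C ⊗[k] C) (εC : C →ₗ[k] k)
    (act : C →ₗ[k] H →ₗ[k] C) : Prop :=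
  IsHomCoalgebra k αC ΔC εC ∧
  IsHomModule k αH μH eH αC act ∧
  (∀ c h, ΔC (act c h) = TensorProduct.map (TensorProduct.lift act) (TensorProduct.lift act)
      (TensorProduct.tensorTensorTensorComm k C C H H (ΔC c ⊗ₜ[k] ΔH h))) ∧
  (∀ c h, εC (act c h) = εC c * εH h)

/-- A Hom-Hopf algebra `(H, α, μ, e, Δ, ε, S)` over `k`. -/
def IsHomHopf (αH : H ≃ₗ[k] H) (μ : H →ₗ[k] H →ₗ[k] H) (e : H)
    (Δ : H →ₗ[k] H ⊗[k] H) (ε : H →ₗ[k] k) (S : H →ₗ[k] H) : Prop :=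
  IsHomBialgebra k αH μ e Δ ε ∧
  (∀ h, S (αH h) = αH (S h)) ∧
  (∀ h, TensorProduct.lift μ
      (TensorProduct.map S (LinearMap.id : H →ₗ[k] H) (Δ h)) = ε h • e) ∧
  (∀ h, TensorProduct.lift μ
      (TensorProduct.map (LinearMap.id : H →ₗ[k] H) S (Δ h)) = ε h • e)

/-- A `p`-th right-right Yetter-Drinfeld module over a Hom-Hopf algebra `H`. -/
def IsYetterDrinfeld (αH : H ≃ₗ[k] H) (μ : H →ₗ[k] H →ₗ[k] H) (e : H)
    (Δ : H →ₗ[k] H ⊗[k] H) (ε : H →ₗ[k] k) (S : H →ₗ[k] H) (p : ℤ)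
    (αU : U ≃ₗ[k] U) (act : U →ₗ[k] H →ₗ[k] U) (ρ : U →ₗ[k] U ⊗[k] H) : Prop :=
  IsHomModule k αH μ e αU act ∧
  IsHomComodule k αH Δ ε αU ρ ∧
  ∀ u h, ρ (act u h)
    = TensorProduct.map
        (TensorProduct.lift act ∘ₗ
          TensorProduct.map (LinearMap.id : U →ₗ[k] U) αH.symm.toLinearMap)
        (TensorProduct.lift μ ∘ₗ
          TensorProduct.map (S ∘ₗ (αH ^ (p - 2)).toLinearMap)
            (TensorProduct.lift μ ∘ₗ
              TensorProduct.map αH.symm.toLinearMap ((αH ^ (p - 4)).toLinearMap)))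
        (TensorProduct.tensorTensorTensorComm k U H H (H ⊗[k] H)
          (TensorProduct.map (LinearMap.id : U ⊗[k] H →ₗ[k] U ⊗[k] H)
            (TensorProduct.leftComm k H H H).toLinearMap
            (TensorProduct.tensorTensorTensorComm k U H H (H ⊗[k] H)
              (ρ u ⊗ₜ[k]
                TensorProduct.map (LinearMap.id : H →ₗ[k] H) Δ (Δ h)))))

/-- The smash coproduct comultiplication on `B ⊗ H` induced by
`φ : B ⊗ H → H ⊗ B`: `Δ(b ⊗ h) = (b₁ ⊗ (h₁)^φ) ⊗ ((b₂)^φ ⊗ h₂)`. -/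
def smashComul (φ : B ⊗[k] H →ₗ[k] H ⊗[k] B) (ΔB : B →ₗ[k] B ⊗[k] B)
    (ΔH : H →ₗ[k] H ⊗[k] H) : B ⊗[k] H →ₗ[k] (B ⊗[k] H) ⊗[k] (B ⊗[k] H) :=
  (TensorProduct.assoc k B H (B ⊗[k] H)).symm.toLinearMap
  ∘ₗ TensorProduct.map (LinearMap.id : B →ₗ[k] B)
       (TensorProduct.assoc k H B H).toLinearMap
  ∘ₗ TensorProduct.map (LinearMap.id : B →ₗ[k] B)
       (TensorProduct.map φ (LinearMap.id : H →ₗ[k] H))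
  ∘ₗ TensorProduct.map (LinearMap.id : B →ₗ[k] B)
       (TensorProduct.assoc k B H H).symm.toLinearMap
  ∘ₗ (TensorProduct.assoc k B B (H ⊗[k] H)).toLinearMap
  ∘ₗ TensorProduct.map ΔB ΔH

/-- The smash coproduct counit on `B ⊗ H`: `ε(b ⊗ h) = εB(b) εH(h)`. -/
def smashCounit (εB : B →ₗ[k] k) (εH : H →ₗ[k] k) : B ⊗[k] H →ₗ[k] k :=
  (TensorProduct.lid k k).toLinearMap ∘ₗ TensorProduct.map εB εH

/-- The componentwise product on `B ⊗ H`: `(a ⊗ h)(b ⊗ g) = ab ⊗ hg`. -/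
def smashMul (μB : B →ₗ[k] B →ₗ[k] B) (μH : H →ₗ[k] H →ₗ[k] H) :
    B ⊗[k] H →ₗ[k] B ⊗[k] H →ₗ[k] B ⊗[k] H :=
  (TensorProduct.mk k (B ⊗[k] H) (B ⊗[k] H)).compr₂
    (TensorProduct.map (TensorProduct.lift μB) (TensorProduct.lift μH)
      ∘ₗ (TensorProduct.tensorTensorTensorComm k B H B H).toLinearMap)

/-- Threefold "componentwise comultiplication" `(C⊗C)⊗C → ((C⊗C)⊗C) ⊗ ((C⊗C)⊗C)`
obtained by applying `Δ2` to each factor and pairing the first and second legs. -/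
def convDelta3 (Δ2 : C →ₗ[k] C ⊗[k] C) :
    (C ⊗[k] C) ⊗[k] C →ₗ[k] ((C ⊗[k] C) ⊗[k] C) ⊗[k] ((C ⊗[k] C) ⊗[k] C) :=
  (TensorProduct.tensorTensorTensorComm k (C ⊗[k] C) (C ⊗[k] C) C C).toLinearMap
  ∘ₗ TensorProduct.map (TensorProduct.tensorTensorTensorComm k C C C C).toLinearMap
       (LinearMap.id : C ⊗[k] C →ₗ[k] C ⊗[k] C)
  ∘ₗ TensorProduct.map (TensorProduct.map Δ2 Δ2) Δ2

/-- The map `ξ_{X,Y}(x ⊗ y) = α_X⁻¹(x)·α_H^m(y₍₁₎) ⊗ α_Y⁻¹(y₍₀₎)` for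
Hom-Long dimodules `X`, `Y`. -/
def longXi (m : ℤ) (αH : H ≃ₗ[k] H) (αX : X ≃ₗ[k] X) (αY : Y ≃ₗ[k] Y)
    (act : X →ₗ[k] H →ₗ[k] X) (ρ : Y →ₗ[k] Y ⊗[k] H) : X ⊗[k] Y →ₗ[k] X ⊗[k] Y :=
  TensorProduct.map
      (TensorProduct.lift act ∘ₗ
        TensorProduct.map (LinearMap.id : X →ₗ[k] X) ((αH ^ m).toLinearMap))
      αY.symm.toLinearMap
    ∘ₗ (TensorProduct.assoc k X H Y).symm.toLinearMap
    ∘ₗ TensorProduct.map (LinearMap.id : X →ₗ[k] X) (TensorProduct.comm k Y H).toLinearMap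
    ∘ₗ TensorProduct.map αX.symm.toLinearMap ρ

/-- The associativity constraint `a_{X,Y,Z}((x⊗y)⊗z) = α_X^{i+1}(x) ⊗ (y ⊗ α_Z^{-j-1}(z))`. -/
def homAssoc (i j : ℤ) (αX : X ≃ₗ[k] X) (αZ : Z ≃ₗ[k] Z) :
    (X ⊗[k] Y) ⊗[k] Z ≃ₗ[k] X ⊗[k] (Y ⊗[k] Z) :=
  (TensorProduct.assoc k X Y Z).trans
    (TensorProduct.congr (αX ^ (i + 1))
      (TensorProduct.congr (LinearEquiv.refl k Y) (αZ ^ (-j - 1))))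

/-- The braiding `τ_{X,Y}(x ⊗ y) = α_Y^{j-i-1}(y₍₀₎) ⊗ α_X^{i-j-1}(x)·α_H^{-p}(y₍₁₎)`
for Yetter-Drinfeld modules. -/
def ydTau (p i j : ℤ) (αH : H ≃ₗ[k] H) (αX : X ≃ₗ[k] X) (αY : Y ≃ₗ[k] Y)
    (act : X →ₗ[k] H →ₗ[k] X) (ρ : Y →ₗ[k] Y ⊗[k] H) : X ⊗[k] Y →ₗ[k] Y ⊗[k] X :=
  TensorProduct.map ((αY ^ (j - i - 1)).toLinearMap)
      (TensorProduct.lift act ∘ₗ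
        TensorProduct.map ((αX ^ (i - j - 1)).toLinearMap) ((αH ^ (-p)).toLinearMap))
    ∘ₗ (TensorProduct.leftComm k X Y H).toLinearMap
    ∘ₗ TensorProduct.map (LinearMap.id : X →ₗ[k] X) ρ

end HomDefs
section Helpers

variable {H U V W : Type*} [AddCommGroup H] [Module k H] [AddCommGroup U] [Module k U]
    [AddCommGroup V] [Module k V] [AddCommGroup W] [Module k W]

/-- The outer part of `longXi`. -/
def xiOuter (m : ℤ) (αH : H ≃ₗ[k] H) (αY : V ≃ₗ[k] V)
    (act : U →ₗ[k] H →ₗ[k] U) : U ⊗[k] (V ⊗[k] H) →ₗ[k] U ⊗[k] V :=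
  TensorProduct.map
      (TensorProduct.lift act ∘ₗ
        TensorProduct.map (LinearMap.id : U →ₗ[k] U) ((αH ^ m).toLinearMap))
      αY.symm.toLinearMap
    ∘ₗ (TensorProduct.assoc k U H V).symm.toLinearMap
    ∘ₗ TensorProduct.map (LinearMap.id : U →ₗ[k] U) (TensorProduct.comm k V H).toLinearMap

theorem xiOuter_tmul (m : ℤ) (αH : H ≃ₗ[k] H) (αY : V ≃ₗ[k] V)
    (act : U →ₗ[k] H →ₗ[k] U) (u : U) (v : V) (h : H) :
    xiOuter k m αH αY act (u ⊗ₜ (v ⊗ₜ h)) = act u ((αH ^ m) h) ⊗ₜ αY.symm v := by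
  simp [xiOuter]

theorem longXi_tmul (m : ℤ) (αH : H ≃ₗ[k] H) (αX : U ≃ₗ[k] U) (αY : V ≃ₗ[k] V)
    (act : U →ₗ[k] H →ₗ[k] U) (ρ : V →ₗ[k] V ⊗[k] H) (u : U) (v : V) :
    longXi k m αH αX αY act ρ (u ⊗ₜ v)
      = xiOuter k m αH αY act (αX.symm u ⊗ₜ ρ v) := by
  simp [longXi, xiOuter]

theorem key_comm (m : ℤ) (αH : H ≃ₗ[k] H) (μ : H →ₗ[k] H →ₗ[k] H) (e : H)
    (Δ : H →ₗ[k] H ⊗[k] H) (ε : H →ₗ[k] k)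
    (αU : U ≃ₗ[k] U) (actU : U →ₗ[k] H →ₗ[k] U)
    (αV : V ≃ₗ[k] V) (actV : V →ₗ[k] H →ₗ[k] V) (ρV : V →ₗ[k] V ⊗[k] H)
    (hV : IsHomLongDimodule k αH μ e Δ ε αV actV ρV) (h : H) (p : U ⊗[k] V) :
    longXi k m αH αU αV actU ρV
        (TensorProduct.map LinearMap.id (actV.flip h ∘ₗ αV.symm.toLinearMap) p)
      = TensorProduct.map LinearMap.id (actV.flip h ∘ₗ αV.symm.toLinearMap)
          (longXi k m αH αU αV actU ρV p) := by
  obtain ⟨⟨hact, -, -⟩, ⟨hco, -, -⟩, hL⟩ := hV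
  have hsymm : ∀ v a, αV.symm (actV v (αH a)) = actV (αV.symm v) a := by
    intro v a
    rw [LinearEquiv.symm_apply_eq, hact, LinearEquiv.apply_symm_apply]
  induction p with
  | zero => simp
  | add x y hx hy => simp only [map_add, hx, hy]
  | tmul u v =>
    obtain ⟨v, rfl⟩ := αV.surjective v
    simp only [TensorProduct.map_tmul, LinearMap.comp_apply, LinearEquiv.coe_coe,
      LinearMap.flip_apply, LinearMap.id_apply, LinearEquiv.symm_apply_apply, longXi_tmul, hL, hco]
    generalize ρV v = s
    induction s with
    | zero => simp
    | add x y hx hy => simp only [map_add, TensorProduct.tmul_add, TensorProduct.add_tmul, hx, hy]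
    | tmul x a => simp [xiOuter_tmul, hsymm]

theorem homAssoc_tmul (i j : ℤ) (αU : U ≃ₗ[k] U) (αW : W ≃ₗ[k] W) (u : U) (v : V) (w : W) :
    homAssoc k i j αU αW ((u ⊗ₜ v) ⊗ₜ w)
      = (αU ^ (i + 1)) u ⊗ₜ (v ⊗ₜ (αW ^ (-j - 1)) w) := by
  simp [homAssoc]

theorem homAssoc_symm_tmul (i j : ℤ) (αU : U ≃ₗ[k] U) (αW : W ≃ₗ[k] W) (u : U) (v : V) (w : W) :
    (homAssoc k i j αU αW).symm ((αU ^ (i + 1)) u ⊗ₜ (v ⊗ₜ w))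
      = (u ⊗ₜ v) ⊗ₜ (αW ^ (-j - 1)).symm w := by
  rw [LinearEquiv.symm_apply_eq, homAssoc_tmul, LinearEquiv.apply_symm_apply]

/-- The right-hand part of the D-equation with the coaction value replaced by `t`. -/
def auxQ (i j m : ℤ) (αH : H ≃ₗ[k] H) (αU : U ≃ₗ[k] U) (αV : V ≃ₗ[k] V)
    (actV : V →ₗ[k] H →ₗ[k] V) (αW : W ≃ₗ[k] W) :
    (U ⊗[k] V) ⊗[k] (W ⊗[k] H) →ₗ[k] (U ⊗[k] V) ⊗[k] W :=
  (homAssoc k i j αU αW).symm.toLinearMap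
    ∘ₗ TensorProduct.map LinearMap.id (xiOuter k m αH αW actV)
    ∘ₗ (TensorProduct.assoc k U V (W ⊗[k] H)).toLinearMap
    ∘ₗ TensorProduct.map
      (TensorProduct.map (αU ^ (i + 1)).toLinearMap αV.symm.toLinearMap) LinearMap.id

theorem auxQ_pure (i j m : ℤ) (αH : H ≃ₗ[k] H) (αU : U ≃ₗ[k] U) (αV : V ≃ₗ[k] V)
    (actV : V →ₗ[k] H →ₗ[k] V) (αW : W ≃ₗ[k] W) (p : U ⊗[k] V) (w : W) (h : H) :
    auxQ k i j m αH αU αV actV αW (p ⊗ₜ (w ⊗ₜ h))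
      = (TensorProduct.map LinearMap.id (actV.flip ((αH ^ m) h) ∘ₗ αV.symm.toLinearMap) p)
        ⊗ₜ (αW ^ (-j - 1)).symm (αW.symm w) := by
  induction p with
  | zero => simp
  | add x y hx hy => simp only [map_add, TensorProduct.add_tmul, hx, hy]
  | tmul u v =>
    simp only [auxQ, LinearMap.comp_apply, LinearEquiv.coe_coe, TensorProduct.map_tmul,
      TensorProduct.assoc_tmul, LinearMap.id_apply, xiOuter_tmul, homAssoc_symm_tmul,
      LinearMap.flip_apply]

theorem auxQ_eq (i j m : ℤ) (αH : H ≃ₗ[k] H) (αU : U ≃ₗ[k] U) (αV : V ≃ₗ[k] V)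
    (actV : V →ₗ[k] H →ₗ[k] V) (αW : W ≃ₗ[k] W) (ρW : W →ₗ[k] W ⊗[k] H)
    (p : U ⊗[k] V) (w : W) :
    (homAssoc k i j αU αW).symm
      (TensorProduct.map (LinearMap.id : U →ₗ[k] U) (longXi k m αH αV αW actV ρW)
        (homAssoc k i j αU αW (p ⊗ₜ w)))
      = auxQ k i j m αH αU αV actV αW (p ⊗ₜ ρW ((αW ^ (-j - 1)) w)) := by
  induction p with
  | zero => simp
  | add x y hx hy => simp only [map_add, TensorProduct.add_tmul, hx, hy]
  | tmul u v =>
    simp only [auxQ, LinearMap.comp_apply, LinearEquiv.coe_coe, TensorProduct.map_tmul,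
      TensorProduct.assoc_tmul, LinearMap.id_apply, homAssoc_tmul, longXi_tmul]

end Helpers

/-- the generalized Hom-type D-equation for the maps `ξ` on
Hom-Long dimodules. -/
theorem homLong_D_equation
    {H U V W : Type*} [AddCommGroup H] [Module k H] [AddCommGroup U] [Module k U]
    [AddCommGroup V] [Module k V] [AddCommGroup W] [Module k W]
    (αH : H ≃ₗ[k] H) (μ : H →ₗ[k] H →ₗ[k] H) (e : H)
    (Δ : H →ₗ[k] H ⊗[k] H) (ε : H →ₗ[k] k)
    (hH : IsHomBialgebra k αH μ e Δ ε) (i j m : ℤ)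
    (αU : U ≃ₗ[k] U) (actU : U →ₗ[k] H →ₗ[k] U) (ρU : U →ₗ[k] U ⊗[k] H)
    (hU : IsHomLongDimodule k αH μ e Δ ε αU actU ρU)
    (αV : V ≃ₗ[k] V) (actV : V →ₗ[k] H →ₗ[k] V) (ρV : V →ₗ[k] V ⊗[k] H)
    (hV : IsHomLongDimodule k αH μ e Δ ε αV actV ρV)
    (αW : W ≃ₗ[k] W) (actW : W →ₗ[k] H →ₗ[k] W) (ρW : W →ₗ[k] W ⊗[k] H)
    (hW : IsHomLongDimodule k αH μ e Δ ε αW actW ρW) :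
    TensorProduct.map (longXi k m αH αU αV actU ρV) (LinearMap.id : W →ₗ[k] W)
        ∘ₗ (homAssoc k i j (Y := V) αU αW).symm.toLinearMap
        ∘ₗ TensorProduct.map (LinearMap.id : U →ₗ[k] U) (longXi k m αH αV αW actV ρW)
        ∘ₗ (homAssoc k i j (Y := V) αU αW).toLinearMap
      = (homAssoc k i j (Y := V) αU αW).symm.toLinearMap
        ∘ₗ TensorProduct.map (LinearMap.id : U →ₗ[k] U) (longXi k m αH αV αW actV ρW)
        ∘ₗ (homAssoc k i j (Y := V) αU αW).toLinearMap
        ∘ₗ TensorProduct.map (longXi k m αH αU αV actU ρV) (LinearMap.id : W →ₗ[k] W) := by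
  apply TensorProduct.ext'
  intro p w
  simp only [LinearMap.comp_apply, LinearEquiv.coe_coe, TensorProduct.map_tmul,
    LinearMap.id_apply, auxQ_eq]
  generalize ρW ((αW ^ (-j - 1)) w) = t
  induction t with
  | zero => simp
  | add x y hx hy => simp only [map_add, TensorProduct.tmul_add, hx, hy]
  | tmul w h =>
    simp only [auxQ_pure, TensorProduct.map_tmul, LinearMap.id_apply]
    rw [key_comm k m αH μ e Δ ε αU actU αV actV ρV hV]
end
end

section
/- Let (H, α_H) be a finite-dimensional Hom-bialgebra over a field k and q ∈ ℤ. Let X = H*⊗H with structure map α_X = ᾱ⊗α_H, comultiplication Δ_X(f⊗h) = (f_[1]⊗h₁)⊗(f_[2]⊗h₂) and counit ε_X(f⊗h) = f(1_H)ε_H(h), where ᾱ(f) = f∘α_H^{-1} and f_[1]⊗f_[2] is the unique element of H*⊗H* with f_[1](x)f_[2](y) = f(α_H^{-2}(yx)) for all x,y ∈ H. Define ζ : X⊗X → k by ζ((f⊗x)⊗(f'⊗y)) = f(α_H^{q}(y))ε_H(x)f'(1_H), and linear maps ζ^{12}, ζ^{23} : X⊗X⊗X → k by ζ^{12}(a⊗b⊗c)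 = ζ(a⊗b)ε_X(c) and ζ^{23}(a⊗b⊗c) = ε_X(a)ζ(b⊗c). For linear maps η, η' : X⊗X⊗X → k define (η∗η')(a⊗b⊗c) = Σ η((α_X^{-2}(a))⁽¹⁾ ⊗ (α_X^{-2}(b))⁽¹⁾ ⊗ (α_X^{-2}(c))⁽¹⁾) η'((α_X^{-2}(a))⁽²⁾ ⊗ (α_X^{-2}(b))⁽²⁾ ⊗ (α_X^{-2}(c))⁽²⁾), where x⁽¹⁾⊗x⁽²⁾ denotes Δ_X(x). Then ζ^{12} ∗ ζ^{23} = ζ^{23} ∗ ζ^{12}. -/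
open TensorProduct BigOperators

noncomputable section

variable (k : Type*) [Field k]

section Aux

variable {V W : Type*} [AddCommGroup V] [Module k V] [AddCommGroup W] [Module k W]

lemma aux_smash (ΔB : V →ₗ[k] V ⊗[k] V) (ΔH : W →ₗ[k] W ⊗[k] W) (f : V) (x : W) :
    smashComul k (TensorProduct.comm k V W).toLinearMap ΔB ΔH (f ⊗ₜ[k] x)
      = TensorProduct.tensorTensorTensorComm k V V W W (ΔB f ⊗ₜ[k] ΔH x) := by
  simp only [smashComul, LinearMap.comp_apply, TensorProduct.map_tmul]
  generalize ΔB f = S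
  generalize ΔH x = T
  induction S using TensorProduct.induction_on with
  | zero => simp
  | add a b ha hb => simp only [TensorProduct.add_tmul, map_add, ha, hb]
  | tmul a b =>
    induction T using TensorProduct.induction_on with
    | zero => simp
    | add c d hc hd => simp only [TensorProduct.tmul_add, map_add, hc, hd]
    | tmul c d => simp

lemma aux_right (ηV : V →ₗ[k] k) (ηW : W →ₗ[k] k) (S : V ⊗[k] V) (T : W ⊗[k] W) :
    TensorProduct.rid k _ (TensorProduct.map LinearMap.id (smashCounit k ηV ηW)
      (TensorProduct.tensorTensorTensorComm k V V W W (S ⊗ₜ[k] T)))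
    = TensorProduct.rid k _ (TensorProduct.map LinearMap.id ηV S) ⊗ₜ[k]
      TensorProduct.rid k _ (TensorProduct.map LinearMap.id ηW T) := by
  induction S using TensorProduct.induction_on with
  | zero => simp
  | add a b ha hb => simp only [TensorProduct.add_tmul, map_add, ha, hb]
  | tmul a b =>
    induction T using TensorProduct.induction_on with
    | zero => simp
    | add c d hc hd => simp only [TensorProduct.tmul_add, map_add, hc, hd]
    | tmul c d => simp only [smashCounit, TensorProduct.tensorTensorTensorComm_tmul, TensorProduct.map_tmul, LinearMap.comp_apply, LinearEquiv.coe_coe, TensorProduct.lid_tmul, TensorProduct.rid_tmul, LinearMap.id_apply, TensorProduct.tmul_smul, ← TensorProduct.smul_tmul', smul_eq_mul, smul_smul, mul_comm]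

lemma aux_left (ηV : V →ₗ[k] k) (ηW : W →ₗ[k] k) (S : V ⊗[k] V) (T : W ⊗[k] W) :
    TensorProduct.lid k _ (TensorProduct.map (smashCounit k ηV ηW) LinearMap.id
      (TensorProduct.tensorTensorTensorComm k V V W W (S ⊗ₜ[k] T)))
    = TensorProduct.lid k _ (TensorProduct.map ηV LinearMap.id S) ⊗ₜ[k]
      TensorProduct.lid k _ (TensorProduct.map ηW LinearMap.id T) := by
  induction S using TensorProduct.induction_on with
  | zero => simp
  | add a b ha hb => simp only [TensorProduct.add_tmul, map_add, ha, hb]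
  | tmul a b =>
    induction T using TensorProduct.induction_on with
    | zero => simp
    | add c d hc hd => simp only [TensorProduct.tmul_add, map_add, hc, hd]
    | tmul c d => simp only [smashCounit, TensorProduct.tensorTensorTensorComm_tmul, TensorProduct.map_tmul, LinearMap.comp_apply, LinearEquiv.coe_coe, TensorProduct.lid_tmul, TensorProduct.rid_tmul, LinearMap.id_apply, TensorProduct.tmul_smul, ← TensorProduct.smul_tmul', smul_eq_mul, smul_smul, mul_comm]

lemma aux_conv (D : V →ₗ[k] V ⊗[k] V) (F G : (V ⊗[k] V) ⊗[k] V →ₗ[k] k) (a b c : V) :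
    ((TensorProduct.lid k k).toLinearMap ∘ₗ TensorProduct.map F G ∘ₗ convDelta3 k D)
      ((a ⊗ₜ[k] b) ⊗ₜ[k] c)
    = TensorProduct.lid k k (TensorProduct.map F G
      (TensorProduct.tensorTensorTensorComm k (V ⊗[k] V) (V ⊗[k] V) V V
        (TensorProduct.tensorTensorTensorComm k V V V V (D a ⊗ₜ[k] D b) ⊗ₜ[k] D c))) := by
  simp [convDelta3]

variable (η : V →ₗ[k] k) (ζ : V ⊗[k] V →ₗ[k] k) (F G : (V ⊗[k] V) ⊗[k] V →ₗ[k] k)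
  (hF : ∀ a b c, F ((a ⊗ₜ[k] b) ⊗ₜ[k] c) = ζ (a ⊗ₜ[k] b) * η c)
  (hG : ∀ a b c, G ((a ⊗ₜ[k] b) ⊗ₜ[k] c) = η a * ζ (b ⊗ₜ[k] c))

include hF hG in
lemma aux_FG (s t u : V ⊗[k] V) :
    TensorProduct.lid k k (TensorProduct.map F G
      (TensorProduct.tensorTensorTensorComm k (V ⊗[k] V) (V ⊗[k] V) V V
        (TensorProduct.tensorTensorTensorComm k V V V V (s ⊗ₜ[k] t) ⊗ₜ[k] u)))
    = TensorProduct.lid k k (TensorProduct.map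
        (TensorProduct.curry ζ (TensorProduct.rid k _ (TensorProduct.map LinearMap.id η s)))
        ((TensorProduct.curry ζ).flip (TensorProduct.lid k _ (TensorProduct.map η LinearMap.id u)))
        t) := by
  induction s using TensorProduct.induction_on with
  | zero => simp
  | add a b ha hb => simp only [TensorProduct.add_tmul, map_add, ha, hb, TensorProduct.map_add_left, LinearMap.add_apply]
  | tmul a b =>
    induction u using TensorProduct.induction_on with
    | zero => simp
    | add c d hc hd => simp only [TensorProduct.tmul_add, map_add, hc, hd, TensorProduct.map_add_right, LinearMap.add_apply]
    | tmul c d =>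
      induction t using TensorProduct.induction_on with
      | zero => simp
      | add c d hc hd => simp only [TensorProduct.tmul_add, TensorProduct.add_tmul, map_add, hc, hd]
      | tmul x y => simp [hF, hG]; ring

include hF hG in
lemma aux_GF (s t u : V ⊗[k] V) :
    TensorProduct.lid k k (TensorProduct.map G F
      (TensorProduct.tensorTensorTensorComm k (V ⊗[k] V) (V ⊗[k] V) V V
        (TensorProduct.tensorTensorTensorComm k V V V V (s ⊗ₜ[k] t) ⊗ₜ[k] u)))
    = TensorProduct.lid k k (TensorProduct.map
        ((TensorProduct.curry ζ).flip (TensorProduct.rid k _ (TensorProduct.map LinearMap.id η u)))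
        (TensorProduct.curry ζ (TensorProduct.lid k _ (TensorProduct.map η LinearMap.id s)))
        t) := by
  induction s using TensorProduct.induction_on with
  | zero => simp
  | add a b ha hb => simp only [TensorProduct.add_tmul, map_add, ha, hb, TensorProduct.map_add_right, LinearMap.add_apply]
  | tmul a b =>
    induction u using TensorProduct.induction_on with
    | zero => simp
    | add c d hc hd => simp only [TensorProduct.tmul_add, map_add, hc, hd, TensorProduct.map_add_left, LinearMap.add_apply]
    | tmul c d =>
      induction t using TensorProduct.induction_on with
      | zero => simp
      | add c d hc hd => simp only [TensorProduct.tmul_add, TensorProduct.add_tmul, map_add, hc, hd]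
      | tmul x y => simp [hF, hG]; ring


include hF hG in
lemma aux_main (D : V →ₗ[k] V ⊗[k] V)
    (h : ∀ a b c, TensorProduct.lid k k (TensorProduct.map
        (TensorProduct.curry ζ (TensorProduct.rid k _ (TensorProduct.map LinearMap.id η (D a))))
        ((TensorProduct.curry ζ).flip (TensorProduct.lid k _ (TensorProduct.map η LinearMap.id (D c))))
        (D b)) = TensorProduct.lid k k (TensorProduct.map
        ((TensorProduct.curry ζ).flip (TensorProduct.rid k _ (TensorProduct.map LinearMap.id η (D c))))
        (TensorProduct.curry ζ (TensorProduct.lid k _ (TensorProduct.map η LinearMap.id (D a))))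
        (D b))) :
    (TensorProduct.lid k k).toLinearMap ∘ₗ TensorProduct.map F G ∘ₗ convDelta3 k D
    = (TensorProduct.lid k k).toLinearMap ∘ₗ TensorProduct.map G F ∘ₗ convDelta3 k D := by
  apply TensorProduct.ext_threefold
  intro a b c
  rw [aux_conv, aux_conv, aux_FG k η ζ F G hF hG, aux_GF k η ζ F G hF hG, h]

end Aux

section Aux2
variable {H : Type*} [AddCommGroup H] [Module k H]

lemma aux_dd_right (S : Module.Dual k H ⊗[k] Module.Dual k H) (e w : H) :
    (TensorProduct.rid k _ (TensorProduct.map LinearMap.id (Module.Dual.eval k H e) S)) w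
      = TensorProduct.dualDistrib k H H S (w ⊗ₜ[k] e) := by
  induction S using TensorProduct.induction_on with
  | zero => simp
  | add a b ha hb => simp only [map_add, LinearMap.add_apply, ha, hb]
  | tmul a b => simp [mul_comm]

lemma aux_dd_left (S : Module.Dual k H ⊗[k] Module.Dual k H) (e w : H) :
    (TensorProduct.lid k _ (TensorProduct.map (Module.Dual.eval k H e) LinearMap.id S)) w
      = TensorProduct.dualDistrib k H H S (e ⊗ₜ[k] w) := by
  induction S using TensorProduct.induction_on with
  | zero => simp
  | add a b ha hb => simp only [map_add, LinearMap.add_apply, ha, hb]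
  | tmul a b => simp

end Aux2

section Aux3
variable {V W : Type*} [AddCommGroup V] [Module k V] [AddCommGroup W] [Module k W]
variable (p : V →ₗ[k] W →ₗ[k] k) (η : V →ₗ[k] k) (ε : W →ₗ[k] k)
    (ζ : (V ⊗[k] W) ⊗[k] (V ⊗[k] W) →ₗ[k] k)
    (hζ : ∀ (f f' : V) (x y : W),
        ζ ((f ⊗ₜ[k] x) ⊗ₜ[k] (f' ⊗ₜ[k] y)) = p f y * (ε x * η f'))

include hζ in
lemma aux_midFG (f h : V) (x z : W) (S : V ⊗[k] V) (T : W ⊗[k] W) :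
    TensorProduct.lid k k (TensorProduct.map
        (TensorProduct.curry ζ (f ⊗ₜ[k] x))
        ((TensorProduct.curry ζ).flip (h ⊗ₜ[k] z))
        (TensorProduct.tensorTensorTensorComm k _ _ W W (S ⊗ₜ[k] T)))
    = p f (TensorProduct.rid k _ (TensorProduct.map LinearMap.id ε T)) * ε x *
      p (TensorProduct.lid k _ (TensorProduct.map η LinearMap.id S)) z * η h := by
  induction S using TensorProduct.induction_on with
  | zero => simp
  | add a b ha hb => simp only [TensorProduct.add_tmul, map_add, ha, hb, LinearMap.add_apply]; ring
  | tmul a b =>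
    induction T using TensorProduct.induction_on with
    | zero => simp
    | add c d hc hd => simp only [TensorProduct.tmul_add, map_add, hc, hd]; ring
    | tmul c d => simp [hζ]; ring

include hζ in
lemma aux_midGF (f h : V) (x z : W) (S : V ⊗[k] V) (T : W ⊗[k] W) :
    TensorProduct.lid k k (TensorProduct.map
        ((TensorProduct.curry ζ).flip (h ⊗ₜ[k] z))
        (TensorProduct.curry ζ (f ⊗ₜ[k] x))
        (TensorProduct.tensorTensorTensorComm k _ _ W W (S ⊗ₜ[k] T)))
    = p f (TensorProduct.lid k _ (TensorProduct.map ε LinearMap.id T)) * ε x *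
      p (TensorProduct.rid k _ (TensorProduct.map LinearMap.id η S)) z * η h := by
  induction S using TensorProduct.induction_on with
  | zero => simp
  | add a b ha hb => simp only [TensorProduct.add_tmul, map_add, ha, hb, LinearMap.add_apply]; ring
  | tmul a b =>
    induction T using TensorProduct.induction_on with
    | zero => simp
    | add c d hc hd => simp only [TensorProduct.tmul_add, map_add, hc, hd]; ring
    | tmul c d => simp [hζ]; ring

include hζ in
lemma aux_final (ΔB : V →ₗ[k] V ⊗[k] V) (ΔH : W →ₗ[k] W ⊗[k] W)
    (hB : ∀ f, TensorProduct.rid k _ (TensorProduct.map LinearMap.id η (ΔB f))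
      = TensorProduct.lid k _ (TensorProduct.map η LinearMap.id (ΔB f)))
    (hW : ∀ f, TensorProduct.rid k _ (TensorProduct.map LinearMap.id ε (ΔH f))
      = TensorProduct.lid k _ (TensorProduct.map ε LinearMap.id (ΔH f)))
    (A : V →ₗ[k] V) (B : W →ₗ[k] W)
    (F G : ((V ⊗[k] W) ⊗[k] (V ⊗[k] W)) ⊗[k] (V ⊗[k] W) →ₗ[k] k)
    (hF : ∀ a b c, F ((a ⊗ₜ[k] b) ⊗ₜ[k] c) = ζ (a ⊗ₜ[k] b) * smashCounit k η ε c)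
    (hG : ∀ a b c, G ((a ⊗ₜ[k] b) ⊗ₜ[k] c) = smashCounit k η ε a * ζ (b ⊗ₜ[k] c)) :
    (TensorProduct.lid k k).toLinearMap ∘ₗ TensorProduct.map F G
        ∘ₗ convDelta3 (C := V ⊗[k] W) k
            (smashComul k (TensorProduct.comm k V W).toLinearMap ΔB ΔH
              ∘ₗ TensorProduct.map A B)
    = (TensorProduct.lid k k).toLinearMap ∘ₗ TensorProduct.map G F
        ∘ₗ convDelta3 (C := V ⊗[k] W) k
            (smashComul k (TensorProduct.comm k V W).toLinearMap ΔB ΔH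
              ∘ₗ TensorProduct.map A B) := by
  refine aux_main k (V := V ⊗[k] W) _ ζ _ _ hF hG _ ?_
  intro a b c
  induction a using TensorProduct.induction_on with
  | zero => simp
  | add a b ha hb => simp only [map_add, TensorProduct.map_add_left, TensorProduct.map_add_right, LinearMap.add_apply, ha, hb]
  | tmul f x =>
  induction c using TensorProduct.induction_on with
  | zero => simp
  | add a b ha hb => simp only [map_add, TensorProduct.map_add_left, TensorProduct.map_add_right, LinearMap.add_apply, ha, hb]
  | tmul h z =>
  induction b using TensorProduct.induction_on with
  | zero => simp
  | add a b ha hb => simp only [map_add, ha, hb]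
  | tmul g y =>
  simp only [LinearMap.comp_apply, TensorProduct.map_tmul, aux_smash, aux_right, aux_left, hB, hW]
  rw [aux_midFG k p η ε ζ hζ, aux_midGF k p η ε ζ hζ, hB, hW]

end Aux3

set_option maxHeartbeats 2000000 in
/-- the D-type equation `ζ¹² ∗ ζ²³ = ζ²³ ∗ ζ¹²` for the linear
form `ζ` on the Hom-Long codouble `H* ⊗ H`.  Here `α_X⁻¹ = ᾱ⁻¹ ⊗ α⁻¹`, where
`ᾱ⁻¹(f) = f ∘ α = αH.dualMap f`. -/
theorem homLongCodouble_D_equation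
    {H : Type*} [AddCommGroup H] [Module k H] [FiniteDimensional k H] (q : ℤ)
    (αH : H ≃ₗ[k] H) (μ : H →ₗ[k] H →ₗ[k] H) (e : H)
    (Δ : H →ₗ[k] H ⊗[k] H) (ε : H →ₗ[k] k)
    (hH : IsHomBialgebra k αH μ e Δ ε)
    (Δbar : Module.Dual k H →ₗ[k] Module.Dual k H ⊗[k] Module.Dual k H)
    (hΔbar : ∀ (f : Module.Dual k H) (x y : H),
        TensorProduct.dualDistrib k H H (Δbar f) (x ⊗ₜ[k] y)
          = f (αH.symm (αH.symm (μ y x))))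
    (ζ : (Module.Dual k H ⊗[k] H) ⊗[k] (Module.Dual k H ⊗[k] H) →ₗ[k] k)
    (hζ : ∀ (f f' : Module.Dual k H) (x y : H),
        ζ ((f ⊗ₜ[k] x) ⊗ₜ[k] (f' ⊗ₜ[k] y)) = f ((αH ^ q) y) * (ε x * f' e))
    (ζ12 ζ23 : ((Module.Dual k H ⊗[k] H) ⊗[k] (Module.Dual k H ⊗[k] H)) ⊗[k]
        (Module.Dual k H ⊗[k] H) →ₗ[k] k)
    (hζ12 : ∀ (a b c : Module.Dual k H ⊗[k] H),
        ζ12 ((a ⊗ₜ[k] b) ⊗ₜ[k] c)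
          = ζ (a ⊗ₜ[k] b) * smashCounit k (Module.Dual.eval k H e) ε c)
    (hζ23 : ∀ (a b c : Module.Dual k H ⊗[k] H),
        ζ23 ((a ⊗ₜ[k] b) ⊗ₜ[k] c)
          = smashCounit k (Module.Dual.eval k H e) ε a * ζ (b ⊗ₜ[k] c)) :
    (TensorProduct.lid k k).toLinearMap ∘ₗ TensorProduct.map ζ12 ζ23
        ∘ₗ convDelta3 (C := Module.Dual k H ⊗[k] H) k
            (smashComul k (TensorProduct.comm k (Module.Dual k H) H).toLinearMap Δbar Δ
              ∘ₗ TensorProduct.map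
                  (αH.dualMap.toLinearMap ∘ₗ αH.dualMap.toLinearMap)
                  (αH.symm.toLinearMap ∘ₗ αH.symm.toLinearMap))
      = (TensorProduct.lid k k).toLinearMap ∘ₗ TensorProduct.map ζ23 ζ12
          ∘ₗ convDelta3 (C := Module.Dual k H ⊗[k] H) k
              (smashComul k (TensorProduct.comm k (Module.Dual k H) H).toLinearMap Δbar Δ
                ∘ₗ TensorProduct.map
                    (αH.dualMap.toLinearMap ∘ₗ αH.dualMap.toLinearMap)
                    (αH.symm.toLinearMap ∘ₗ αH.symm.toLinearMap)) := by
  obtain ⟨⟨hα, -, he, hl, hr⟩, ⟨-, -, -, hcl, hcr⟩, -⟩ := hH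
  refine aux_final k (V := Module.Dual k H) (W := H)
    ((LinearMap.lcomp k k (αH ^ q).toLinearMap)) (Module.Dual.eval k H e) ε ζ hζ Δbar Δ ?_ ?_ _ _
    ζ12 ζ23 hζ12 hζ23
  · intro f
    ext w
    rw [aux_dd_right, aux_dd_left, hΔbar, hΔbar, hl, hr]
  · intro x
    rw [hcl, hcr]
end
end

section
/- Let (H, α_H, S) be a Hom-Hopf algebra over a field k with α_H bijective, and let m ∈ ℤ. Then the linear map Φ : H⊗H → H⊗H defined by Φ(c⊗a) = α_H^{-2}((a₂)₁) ⊗ S(α_H^{m-2}(a₁)) (α_H^{-2}(c) α_H^{m-4}((a₂)₂)), where Δ(a) = a₁⊗a₂ and (a₂)₁⊗(a₂)₂ = Δ(a₂), is a Hom-monoidal entwining datum, i.e. (H,H,Φ) satisfies the Hom-entwining axioms (E1)-(E4) together with (E5) and (E6) (with the first factor H as the Hom-coalgebra and the second as the Hom-algebra). -/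
open TensorProduct BigOperators

noncomputable section

variable (k : Type*) [Field k]

section CoreHopf
open Coalgebra Bialgebra HopfAlgebra WithConv

variable {k}
variable {H : Type*} [Ring H] [HopfAlgebra k H]
variable {A : Type*} [Ring A] [Algebra k A] {B : Type*} [Ring B] [Algebra k B]

/-- the constant element of the convolution algebra -/
def cst (H : Type*) [Ring H] [HopfAlgebra k H] (x : A) : WithConv (H →ₗ[k] A) :=
  toConv (LinearMap.toSpanSingleton k A x ∘ₗ counit)

lemma repr_counit_left (a : H) :
    ∑ i ∈ (Repr.arbitrary k a).index,
      (counit (R := k) ((Repr.arbitrary k a).left i)) • (Repr.arbitrary k a).right i = a :=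
  sum_counit_smul _

lemma repr_counit_right (a : H) :
    ∑ i ∈ (Repr.arbitrary k a).index,
      (counit (R := k) ((Repr.arbitrary k a).right i)) • (Repr.arbitrary k a).left i = a := by
  have := congrArg (TensorProduct.rid k H) (sum_tmul_counit_eq (Repr.arbitrary k a))
  simpa only [map_sum, TensorProduct.rid_tmul, one_smul] using this

lemma mul_cst_apply (f : WithConv (H →ₗ[k] A)) (x : A) (a : H) :
    (f * cst H x).ofConv a = f.ofConv a * x := by
  change (f * cst H x : WithConv (H →ₗ[k] A)) a = _
  rw [(Repr.arbitrary k a).convMul_apply]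
  conv_rhs => rw [← repr_counit_right (k := k) a]
  simp [cst, map_sum, Finset.sum_mul]

lemma cst_mul_apply (f : WithConv (H →ₗ[k] A)) (x : A) (a : H) :
    (cst H x * f).ofConv a = x * f.ofConv a := by
  change (cst H x * f : WithConv (H →ₗ[k] A)) a = _
  rw [(Repr.arbitrary k a).convMul_apply]
  conv_rhs => rw [← repr_counit_left (k := k) a]
  simp [cst, map_sum, Finset.mul_sum]

/-- pushforward along an algebra map -/
def pf (φ : A →ₐ[k] B) (f : WithConv (H →ₗ[k] A)) : WithConv (H →ₗ[k] B) :=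
  toConv (φ.toLinearMap ∘ₗ f.ofConv)

lemma pf_mul (φ : A →ₐ[k] B) (f g : WithConv (H →ₗ[k] A)) : pf φ (f * g) = pf φ f * pf φ g := by
  apply WithConv.ext
  ext a
  change φ ((f * g) a) = (pf φ f * pf φ g) a
  rw [(Repr.arbitrary k a).convMul_apply, (Repr.arbitrary k a).convMul_apply]
  simp [pf, map_sum]

lemma pf_one (φ : A →ₐ[k] B) : pf φ (1 : WithConv (H →ₗ[k] A)) = 1 := by
  apply WithConv.ext
  ext a
  simp [pf, LinearMap.convOne_def]

lemma pf_cst (φ : A →ₐ[k] B) (x : A) : pf φ (cst H x) = cst H (φ x) := by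
  apply WithConv.ext
  ext a
  simp [pf, cst]

lemma pf_pf {C : Type*} [Ring C] [Algebra k C] (ψ : B →ₐ[k] C) (φ : A →ₐ[k] B)
    (f : WithConv (H →ₗ[k] A)) : pf ψ (pf φ f) = pf (ψ.comp φ) f := rfl

lemma cst_mul_cst (x y : A) : cst H x * cst H y = (cst H (x * y) : WithConv (H →ₗ[k] A)) := by
  apply WithConv.ext
  ext a
  rw [mul_cst_apply]; simp [cst]

lemma conv_lin_left {M N : Type*} [Ring M] [Algebra k M] [Ring N] [Algebra k N]
    (G : M →ₗ[k] N) (φ : A →ₐ[k] M) (ψ : A →ₐ[k] N)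
    (hG : ∀ x t, G (φ x * t) = ψ x * G t) (s : WithConv (H →ₗ[k] A)) (f : WithConv (H →ₗ[k] M)) :
    toConv (G ∘ₗ (pf φ s * f).ofConv) = pf ψ s * toConv (G ∘ₗ f.ofConv) := by
  apply WithConv.ext
  ext a
  change G ((pf φ s * f) a) = (pf ψ s * toConv (G ∘ₗ f.ofConv)) a
  rw [(Repr.arbitrary k a).convMul_apply, (Repr.arbitrary k a).convMul_apply]
  rw [map_sum]
  exact Finset.sum_congr rfl fun i _ => hG _ _

lemma conv_lin_right {M N : Type*} [Ring M] [Algebra k M] [Ring N] [Algebra k N]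
    (G : M →ₗ[k] N) (φ : A →ₐ[k] M) (ψ : A →ₐ[k] N)
    (hG : ∀ x t, G (t * φ x) = G t * ψ x) (s : WithConv (H →ₗ[k] A)) (f : WithConv (H →ₗ[k] M)) :
    toConv (G ∘ₗ (f * pf φ s).ofConv) = toConv (G ∘ₗ f.ofConv) * pf ψ s := by
  apply WithConv.ext
  ext a
  change G ((f * pf φ s) a) = (toConv (G ∘ₗ f.ofConv) * pf ψ s) a
  rw [(Repr.arbitrary k a).convMul_apply, (Repr.arbitrary k a).convMul_apply]
  rw [map_sum]
  exact Finset.sum_congr rfl fun i _ => hG _ _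

lemma cst_comm (x : A) (f : WithConv (H →ₗ[k] A)) (h : ∀ a, f.ofConv a * x = x * f.ofConv a) :
    f * cst H x = cst H x * f := by
  apply WithConv.ext
  ext a
  rw [mul_cst_apply, cst_mul_apply, h]

lemma conv_at_one (f g : WithConv (H →ₗ[k] A)) :
    (f * g).ofConv 1 = f.ofConv 1 * g.ofConv 1 := by
  change LinearMap.mul' k A (TensorProduct.map f.ofConv g.ofConv (comul 1)) = _
  rw [Bialgebra.comul_one, Algebra.TensorProduct.one_def]
  simp

section beta
variable (β : H →ₐc[k] H)

/-- identity -/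
def cι (k : Type*) [Field k] (H : Type*) [Ring H] [HopfAlgebra k H] : WithConv (H →ₗ[k] H) :=
  toConv LinearMap.id
/-- beta -/
def cb : WithConv (H →ₗ[k] H) := toConv (β : H →ₐ[k] H).toLinearMap
/-- S beta -/
def cs : WithConv (H →ₗ[k] H) := toConv (antipode k ∘ₗ (β : H →ₐ[k] H).toLinearMap)

lemma map_comul_beta (a : H) : TensorProduct.map (β : H →ₐ[k] H).toLinearMap
    (β : H →ₐ[k] H).toLinearMap (comul (R := k) a) = comul (β a) :=
  CoalgHomClass.map_comp_comul_apply β a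

lemma counit_beta (a : H) : counit (R := k) (β a) = counit a :=
  CoalgHomClass.counit_comp_apply β a

lemma cs_mul_cb : cs β * cb β = 1 := by
  apply WithConv.ext
  ext a
  have h := mul_antipode_rTensor_comul_apply (R := k) (β a)
  rw [← map_comul_beta, counit_beta, LinearMap.rTensor, ← LinearMap.comp_apply (TensorProduct.map _ _),
    ← TensorProduct.map_comp] at h
  exact h

lemma cb_mul_cs : cb β * cs β = 1 := by
  apply WithConv.ext
  ext a
  have h := mul_antipode_lTensor_comul_apply (R := k) (β a)
  rw [← map_comul_beta, counit_beta, LinearMap.lTensor, ← LinearMap.comp_apply (TensorProduct.map _ _),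
    ← TensorProduct.map_comp] at h
  exact h

/-- left inclusion -/
abbrev iL (k : Type*) [Field k] (H : Type*) [Ring H] [HopfAlgebra k H] : H →ₐ[k] H ⊗[k] H :=
  Algebra.TensorProduct.includeLeft
/-- right inclusion -/
abbrev iR (k : Type*) [Field k] (H : Type*) [Ring H] [HopfAlgebra k H] : H →ₐ[k] H ⊗[k] H :=
  Algebra.TensorProduct.includeRight

lemma pf_comul_cb : pf (comulAlgHom k H) (cb β) = pf (iL k H) (cb β) * pf (iR k H) (cb β) := by
  apply WithConv.ext
  ext a
  change comul (β a) = (pf (iL k H) (cb β) * pf (iR k H) (cb β)) a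
  rw [(Repr.arbitrary k a).convMul_apply, ← map_comul_beta]
  conv_lhs => rw [← (Repr.arbitrary k a).eq]
  simp [pf, cb, map_sum]

lemma pf_comul_cι : pf (comulAlgHom k H) (cι k H) = pf (iL k H) (cι k H) * pf (iR k H) (cι k H) := by
  exact pf_comul_cb (BialgHom.id k H)

lemma pf_comul_cs : pf (comulAlgHom k H) (cs β) = pf (iR k H) (cs β) * pf (iL k H) (cs β) := by
  apply left_inv_eq_right_inv (a := pf (comulAlgHom k H) (cb β))
  · rw [← pf_mul, cs_mul_cb, pf_one]
  · rw [pf_comul_cb, mul_assoc, ← mul_assoc (pf (iR k H) (cb β)), ← pf_mul, cb_mul_cs, pf_one,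
      one_mul, ← pf_mul, cb_mul_cs, pf_one]

lemma pf_counit_cb : pf (counitAlgHom k H) (cb β) = 1 := by
  apply WithConv.ext
  ext a
  simp [pf, cb, LinearMap.convOne_def, counit_beta]

lemma pf_counit_cι : pf (counitAlgHom k H) (cι k H) = 1 := pf_counit_cb (BialgHom.id k H)

lemma pf_counit_cs : pf (counitAlgHom k H) (cs β) = 1 := by
  apply WithConv.ext
  ext a
  simp [pf, cs, LinearMap.convOne_def, counit_beta]

/-- The untwisted map -/
def Phi0 (c : H) : WithConv (H →ₗ[k] H ⊗[k] H) :=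
  pf (iR k H) (cs β) * (pf (iL k H) (cι k H) * (pf (iR k H) (cst H c) * pf (iR k H) (cb β)))

lemma Phi0_apply (c a : H) : (Phi0 β c).ofConv a =
    ∑ i ∈ (Repr.arbitrary k a).index, ∑ j ∈ (Repr.arbitrary k ((Repr.arbitrary k a).right i)).index,
      (Repr.arbitrary k ((Repr.arbitrary k a).right i)).left j ⊗ₜ[k]
       (antipode k (β ((Repr.arbitrary k a).left i)) * (c *
         β ((Repr.arbitrary k ((Repr.arbitrary k a).right i)).right j))) := by
  change (Phi0 β c) a = _
  unfold Phi0
  rw [(Repr.arbitrary k a).convMul_apply]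
  refine Finset.sum_congr rfl fun i _ => ?_
  rw [(Repr.arbitrary k ((Repr.arbitrary k a).right i)).convMul_apply, Finset.mul_sum]
  refine Finset.sum_congr rfl fun j _ => ?_
  rw [← pf_mul]
  change _ * (_ * (iR k H) ((cst H c * cb β).ofConv _)) = _
  rw [cst_mul_apply]
  simp [pf, cs, cb, cι]


/-- the map on triple tensors -/
def F3 (c : H) : H ⊗[k] (H ⊗[k] H) →ₗ[k] H ⊗[k] H :=
  TensorProduct.map LinearMap.id (LinearMap.mul' k H ∘ₗ
    TensorProduct.map (antipode k ∘ₗ (β : H →ₐ[k] H).toLinearMap)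
      (LinearMap.mulLeft k c ∘ₗ (β : H →ₐ[k] H).toLinearMap)) ∘ₗ
  (TensorProduct.leftComm k H H H).toLinearMap

@[simp] lemma F3_tmul (c x y z : H) : F3 β c (x ⊗ₜ[k] (y ⊗ₜ[k] z)) =
    y ⊗ₜ[k] (antipode k (β x) * (c * β z)) := by
  simp [F3]

/-- double comultiplication -/
def D3 (k : Type*) [Field k] (H : Type*) [Ring H] [HopfAlgebra k H] :
    H →ₐ[k] H ⊗[k] (H ⊗[k] H) :=
  (Algebra.TensorProduct.map (AlgHom.id k H) (comulAlgHom k H)).comp (comulAlgHom k H)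

lemma D3_apply (a : H) : D3 k H a = TensorProduct.map LinearMap.id comul (comul a) := rfl

lemma Phi0_eq_F3 (c a : H) : (Phi0 β c).ofConv a = F3 β c (D3 k H a) := by
  rw [Phi0_apply, D3_apply]
  conv_rhs => rw [← (Repr.arbitrary k a).eq]
  simp only [map_sum, TensorProduct.map_tmul, LinearMap.id_apply]
  refine Finset.sum_congr rfl fun i _ => ?_
  conv_rhs => rw [← (Repr.arbitrary k ((Repr.arbitrary k a).right i)).eq]
  simp only [TensorProduct.tmul_sum, map_sum, F3_tmul]

variable {β} {Ψ : H ⊗[k] H →ₗ[k] H ⊗[k] H}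

lemma C1 (hΨ : ∀ c a, Ψ (c ⊗ₜ a) = (Phi0 β c).ofConv a) (h a b : H) :
    TensorProduct.map (LinearMap.mul' k H) LinearMap.id
      ((TensorProduct.assoc k H H H).symm (TensorProduct.map LinearMap.id Ψ
        (TensorProduct.assoc k H H H (Ψ (h ⊗ₜ a) ⊗ₜ[k] b)))) = Ψ (h ⊗ₜ (a * b)) := by
  have key : ∀ t : H ⊗[k] (H ⊗[k] H),
      TensorProduct.map (LinearMap.mul' k H) LinearMap.id
      ((TensorProduct.assoc k H H H).symm (TensorProduct.map LinearMap.id Ψ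
        (TensorProduct.assoc k H H H (F3 β h t ⊗ₜ[k] b)))) = F3 β h (t * D3 k H b) := by
    intro t
    induction t using TensorProduct.induction_on with
    | zero => simp
    | add s t hs ht => simp only [map_add, TensorProduct.add_tmul, hs, ht, add_mul]
    | tmul x t =>
      induction t using TensorProduct.induction_on with
      | zero => simp
      | add s t hs ht => simp only [map_add, TensorProduct.add_tmul, TensorProduct.tmul_add, hs, ht, add_mul]
      | tmul y z =>
        simp only [F3_tmul, TensorProduct.assoc_tmul, TensorProduct.map_tmul, hΨ, Phi0_eq_F3,
          LinearMap.id_apply]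
        generalize D3 k H b = s
        induction s using TensorProduct.induction_on with
        | zero => simp
        | add s t hs ht => simp only [map_add, TensorProduct.tmul_add, hs, ht, mul_add]
        | tmul u s =>
          induction s using TensorProduct.induction_on with
          | zero => simp
          | add s t hs ht => simp only [map_add, TensorProduct.tmul_add, hs, ht, mul_add]
          | tmul v w => simp [antipode_mul_antidistrib, mul_assoc]
  rw [hΨ, hΨ, Phi0_eq_F3, Phi0_eq_F3, map_mul]
  exact key _

/-- `x ⊗ y ↦ x ⊗ y ⊗ 1` -/
def qq (k : Type*) [Field k] (H : Type*) [Ring H] [HopfAlgebra k H] :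
    H ⊗[k] H →ₐ[k] H ⊗[k] (H ⊗[k] H) :=
  Algebra.TensorProduct.map (AlgHom.id k H) (iL k H)

/-- third inclusion -/
def j3 (k : Type*) [Field k] (H : Type*) [Ring H] [HopfAlgebra k H] :
    H →ₐ[k] H ⊗[k] (H ⊗[k] H) :=
  (Algebra.TensorProduct.includeRight).comp (iR k H)

lemma j3_apply (x : H) : j3 k H x = (1 : H) ⊗ₜ[k] ((1 : H) ⊗ₜ[k] x) := rfl
lemma qq_tmul (x y : H) : qq k H (x ⊗ₜ y) = x ⊗ₜ[k] (y ⊗ₜ[k] (1 : H)) := rfl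

lemma C2aux (hΨ : ∀ c a, Ψ (c ⊗ₜ a) = (Phi0 β c).ofConv a) (c d a : H) :
    TensorProduct.assoc k H H H (TensorProduct.map Ψ LinearMap.id
      ((TensorProduct.assoc k H H H).symm (c ⊗ₜ[k] Ψ (d ⊗ₜ a)))) =
    (pf (j3 k H) (cs β) * (pf (qq k H) (Phi0 β c) *
      (pf (j3 k H) (cst H d) * pf (j3 k H) (cb β)))).ofConv a := by
  let G : H ⊗[k] H →ₗ[k] H ⊗[k] (H ⊗[k] H) :=
    (TensorProduct.assoc k H H H).toLinearMap ∘ₗ TensorProduct.map Ψ LinearMap.id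
      ∘ₗ (TensorProduct.assoc k H H H).symm.toLinearMap ∘ₗ TensorProduct.mk k H (H ⊗[k] H) c
  have hGt : ∀ u v, G (u ⊗ₜ v) = TensorProduct.assoc k H H H (Ψ (c ⊗ₜ u) ⊗ₜ[k] v) := by
    intro u v; simp [G]
  have hL : ∀ x t, G (iR k H x * t) = j3 k H x * G t := by
    intro x t
    induction t using TensorProduct.induction_on with
    | zero => simp
    | add s t hs ht => simp only [map_add, mul_add, hs, ht]
    | tmul u v =>
      simp only [iR, Algebra.TensorProduct.includeRight_apply, Algebra.TensorProduct.tmul_mul_tmul,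
        one_mul, hGt, j3_apply]
      generalize Ψ (c ⊗ₜ u) = w
      induction w using TensorProduct.induction_on with
      | zero => simp
      | add s t hs ht => simp only [map_add, TensorProduct.add_tmul, mul_add, hs, ht]
      | tmul p q => simp
  have hR : ∀ x t, G (t * iR k H x) = G t * j3 k H x := by
    intro x t
    induction t using TensorProduct.induction_on with
    | zero => simp
    | add s t hs ht => simp only [map_add, add_mul, hs, ht]
    | tmul u v =>
      simp only [iR, Algebra.TensorProduct.includeRight_apply, Algebra.TensorProduct.tmul_mul_tmul,
        mul_one, hGt, j3_apply]
      generalize Ψ (c ⊗ₜ u) = w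
      induction w using TensorProduct.induction_on with
      | zero => simp
      | add s t hs ht => simp only [map_add, TensorProduct.add_tmul, add_mul, hs, ht]
      | tmul p q => simp
  have hmid : toConv (G ∘ₗ (pf (iL k H) (cι k H)).ofConv) = pf (qq k H) (Phi0 β c) := by
    apply WithConv.ext
    ext u
    change G (u ⊗ₜ 1) = qq k H ((Phi0 β c).ofConv u)
    rw [hGt, hΨ]
    generalize (Phi0 β c).ofConv u = w
    induction w using TensorProduct.induction_on with
    | zero => simp
    | add s t hs ht => simp only [map_add, TensorProduct.add_tmul, hs, ht]
    | tmul p q => simp [qq_tmul]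
  have := congrArg (fun f => f.ofConv a)
    (conv_lin_left G _ _ hL (cs β) (pf (iL k H) (cι k H) * (pf (iR k H) (cst H d * cb β))))
  rw [conv_lin_right G _ _ hR, hmid] at this
  simp only [pf_mul] at this
  rw [← this, hΨ]
  rfl

lemma C2 (hΨ : ∀ c a, Ψ (c ⊗ₜ a) = (Phi0 β c).ofConv a) (c a : H) :
    TensorProduct.map LinearMap.id comul (Ψ (c ⊗ₜ a)) =
    TensorProduct.assoc k H H H (TensorProduct.map Ψ LinearMap.id
      ((TensorProduct.assoc k H H H).symm (TensorProduct.map LinearMap.id Ψ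
        (TensorProduct.assoc k H H H (comul c ⊗ₜ[k] a))))) := by
  let E : H ⊗[k] H →ₐ[k] H ⊗[k] (H ⊗[k] H) :=
    Algebra.TensorProduct.map (AlgHom.id k H) (comulAlgHom k H)
  have hl : TensorProduct.map LinearMap.id comul (Ψ (c ⊗ₜ a)) = (pf E (Phi0 β c)).ofConv a := by
    rw [hΨ]; rfl
  rw [hl]
  conv_rhs => rw [← (Repr.arbitrary k c).eq]
  simp only [TensorProduct.sum_tmul, map_sum, TensorProduct.assoc_tmul, TensorProduct.map_tmul,
    LinearMap.id_apply]
  simp only [C2aux hΨ]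
  let j23 : H ⊗[k] H →ₐ[k] H ⊗[k] (H ⊗[k] H) := Algebra.TensorProduct.includeRight
  let j1 : H →ₐ[k] H ⊗[k] (H ⊗[k] H) := Algebra.TensorProduct.includeLeft
  let j2 : H →ₐ[k] H ⊗[k] (H ⊗[k] H) := j23.comp (iL k H)
  have hE : ∀ f, pf (H := H) E (pf (iR k H) f) = pf j23 (pf (comulAlgHom k H) f) := fun f => by
    rw [pf_pf, pf_pf]; congr 1
  have hE1 : ∀ f, pf (H := H) E (pf (iL k H) f) = pf j1 f := fun f => by
    rw [pf_pf]; congr 1; ext x; simp [E, j1]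
  have hq1 : ∀ f, pf (H := H) (qq k H) (pf (iL k H) f) = pf j1 f := fun f => by
    rw [pf_pf]; congr 1
  have hq2 : ∀ f, pf (H := H) (qq k H) (pf (iR k H) f) = pf j2 f := fun f => by
    rw [pf_pf]; congr 1
  have h3 : ∀ f, pf (H := H) j23 (pf (iR k H) f) = pf (j3 k H) f := fun f => rfl
  have h2 : ∀ f, pf (H := H) j23 (pf (iL k H) f) = pf j2 f := fun f => rfl
  have hterm : ∀ x y : H, pf (j3 k H) (cs β) * (pf (qq k H) (Phi0 β x) *
      (pf (j3 k H) (cst H y) * pf (j3 k H) (cb β))) =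
      pf (j3 k H) (cs β) * pf j2 (cs β) * pf j1 (cι k H) *
       (cst H (j23 (x ⊗ₜ y)) * (pf j2 (cb β) * pf (j3 k H) (cb β))) := by
    intro x y
    have hc : pf j2 (cb β) * cst H (j3 k H y) = cst H (j3 k H y) * pf j2 (cb β) := by
      apply cst_comm
      intro a
      simp [pf, j3_apply, j2, j23]
    have hm : cst H (j23 (x ⊗ₜ y)) = (cst H (j2 x) * cst H (j3 k H y) :
        WithConv (H →ₗ[k] H ⊗[k] (H ⊗[k] H))) := by
      rw [cst_mul_cst]; simp [j23, j2, j3_apply]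
    rw [hm]
    simp only [Phi0, pf_mul, hq1, hq2, mul_assoc]
    simp only [pf_cst]
    rw [← mul_assoc (pf j2 (cb β)), hc]
    simp only [mul_assoc]
  simp only [hterm]
  have hlhs : pf E (Phi0 β c) = pf (j3 k H) (cs β) * pf j2 (cs β) * pf j1 (cι k H) *
       (cst H (j23 (comul c)) * (pf j2 (cb β) * pf (j3 k H) (cb β))) := by
    simp only [Phi0, pf_mul, hE, hE1, pf_comul_cs, pf_comul_cb, h2, h3, pf_cst, mul_assoc]
    rfl
  rw [hlhs]
  have hcs : cst H (j23 (comul c)) = (∑ i ∈ (Repr.arbitrary k c).index,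
      cst H (j23 ((Repr.arbitrary k c).left i ⊗ₜ (Repr.arbitrary k c).right i)) :
       WithConv (H →ₗ[k] H ⊗[k] (H ⊗[k] H))) := by
    conv_lhs => rw [← (Repr.arbitrary k c).eq]
    rw [map_sum]
    apply WithConv.ext
    ext x
    simp [cst, Finset.smul_sum]
  rw [hcs, Finset.sum_mul, Finset.mul_sum]
  simp

lemma C3 (hΨ : ∀ c a, Ψ (c ⊗ₜ a) = (Phi0 β c).ofConv a) (c a : H) :
    TensorProduct.rid k H (TensorProduct.map LinearMap.id counit (Ψ (c ⊗ₜ a))) =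
      counit (R := k) c • a := by
  let E : H ⊗[k] H →ₐ[k] H := (Algebra.TensorProduct.rid k k H).toAlgHom.comp
    (Algebra.TensorProduct.map (AlgHom.id k H) (counitAlgHom k H))
  have hR : ∀ f, pf (H := H) E (pf (iR k H) f) =
      pf (Algebra.ofId k H) (pf (counitAlgHom k H) f) := fun f => by
    rw [pf_pf, pf_pf]; congr 1; ext x; simp [E, Algebra.ofId_apply, Algebra.algebraMap_eq_smul_one]
  have hL : ∀ f, pf (H := H) E (pf (iL k H) f) = f := fun f => by
    rw [pf_pf]; apply WithConv.ext; ext x; simp [E, pf]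
  have : pf E (Phi0 β c) = cι k H * cst H (algebraMap k H (counit c)) := by
    simp only [Phi0, pf_mul, hR, hL, pf_counit_cb, pf_counit_cs, pf_one, one_mul, mul_one]
    simp only [pf_cst]
    rfl
  have h2 := congrArg (fun f => f.ofConv a) this
  simp only [mul_cst_apply] at h2
  rw [hΨ]
  refine h2.trans ?_
  rw [← Algebra.commutes, ← Algebra.smul_def]
  rfl

lemma C4 (hΨ : ∀ c a, Ψ (c ⊗ₜ a) = (Phi0 β c).ofConv a) (c : H) :
    Ψ (c ⊗ₜ 1) = 1 ⊗ₜ c := by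
  rw [hΨ, Phi0]
  simp only [conv_at_one]
  simp [pf, cs, cb, cι, cst]

lemma C6 (hΨ : ∀ c a, Ψ (c ⊗ₜ a) = (Phi0 β c).ofConv a) (a : H) :
    TensorProduct.lid k H (TensorProduct.map counit LinearMap.id (Ψ (1 ⊗ₜ a))) =
      counit (R := k) a • (1 : H) := by
  let E : H ⊗[k] H →ₐ[k] H := (Algebra.TensorProduct.lid k H).toAlgHom.comp
    (Algebra.TensorProduct.map (counitAlgHom k H) (AlgHom.id k H))
  have hL : ∀ f, pf (H := H) E (pf (iL k H) f) =
      pf (Algebra.ofId k H) (pf (counitAlgHom k H) f) := fun f => by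
    rw [pf_pf, pf_pf]; congr 1; ext x; simp [E, Algebra.ofId_apply, Algebra.algebraMap_eq_smul_one]
  have hR : ∀ f, pf (H := H) E (pf (iR k H) f) = f := fun f => by
    rw [pf_pf]; apply WithConv.ext; ext x; simp [E, pf]
  have h1 : (cst H 1 : WithConv (H →ₗ[k] H)) = 1 := by
    apply WithConv.ext
    ext x
    simp [cst, LinearMap.convOne_def, Algebra.algebraMap_eq_smul_one]
  have : pf E (Phi0 β 1) = 1 := by
    simp only [Phi0, pf_mul, hR, hL, pf_counit_cι, pf_one, one_mul, h1, cs_mul_cb]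
  have h2 := congrArg (fun f => f.ofConv a) this
  rw [hΨ]
  refine h2.trans ?_
  simp [LinearMap.convOne_def, Algebra.algebraMap_eq_smul_one]

lemma C5 (hΨ : ∀ c a, Ψ (c ⊗ₜ a) = (Phi0 β c).ofConv a) (h g a : H) :
    TensorProduct.map LinearMap.id (LinearMap.mul' k H)
      (TensorProduct.tensorTensorTensorComm k H H H H (TensorProduct.map Ψ Ψ
        (TensorProduct.tensorTensorTensorComm k H H H H ((h ⊗ₜ[k] g) ⊗ₜ[k] comul a)))) =
    TensorProduct.map comul LinearMap.id (Ψ ((h * g) ⊗ₜ a)) := by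
  let E : H ⊗[k] H →ₐ[k] (H ⊗[k] H) ⊗[k] H :=
    Algebra.TensorProduct.map (comulAlgHom k H) (AlgHom.id k H)
  let p : H ⊗[k] H →ₐ[k] (H ⊗[k] H) ⊗[k] H :=
    Algebra.TensorProduct.map (iL k H) (AlgHom.id k H)
  let q : H ⊗[k] H →ₐ[k] (H ⊗[k] H) ⊗[k] H :=
    Algebra.TensorProduct.map (iR k H) (AlgHom.id k H)
  let l12 : H ⊗[k] H →ₐ[k] (H ⊗[k] H) ⊗[k] H := Algebra.TensorProduct.includeLeft
  let l3 : H →ₐ[k] (H ⊗[k] H) ⊗[k] H := Algebra.TensorProduct.includeRight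
  have hl : TensorProduct.map comul LinearMap.id (Ψ ((h * g) ⊗ₜ a)) =
      (pf E (Phi0 β (h * g))).ofConv a := by
    rw [hΨ]; rfl
  have hpq : ∀ t s : H ⊗[k] H, TensorProduct.map LinearMap.id (LinearMap.mul' k H)
      (TensorProduct.tensorTensorTensorComm k H H H H (t ⊗ₜ s)) = p t * q s := by
    intro t s
    induction t using TensorProduct.induction_on with
    | zero => simp
    | add s t hs ht => simp only [map_add, TensorProduct.add_tmul, add_mul, hs, ht]
    | tmul x y =>
      induction s using TensorProduct.induction_on with
      | zero => simp
      | add s t hs ht => simp only [map_add, TensorProduct.tmul_add, mul_add, hs, ht]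
      | tmul u v => simp [p, q]
  have hr : TensorProduct.map LinearMap.id (LinearMap.mul' k H)
      (TensorProduct.tensorTensorTensorComm k H H H H (TensorProduct.map Ψ Ψ
        (TensorProduct.tensorTensorTensorComm k H H H H ((h ⊗ₜ[k] g) ⊗ₜ[k] comul a)))) =
      (pf p (Phi0 β h) * pf q (Phi0 β g)).ofConv a := by
    change _ = (pf p (Phi0 β h) * pf q (Phi0 β g)) a
    rw [(Repr.arbitrary k a).convMul_apply]
    conv_lhs => rw [← (Repr.arbitrary k a).eq]
    simp only [TensorProduct.tmul_sum, map_sum, TensorProduct.tensorTensorTensorComm_tmul,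
      TensorProduct.map_tmul, hpq, hΨ]
    rfl
  rw [hl, hr]
  have e3 : ∀ f, pf (H := H) E (pf (iR k H) f) = pf l3 f := fun f => by
    rw [pf_pf]; congr 1; ext x; simp [E, l3]
  have e1 : ∀ f, pf (H := H) E (pf (iL k H) f) = pf l12 (pf (comulAlgHom k H) f) := fun f => by
    rw [pf_pf, pf_pf]; congr 1
  have p3 : ∀ f, pf (H := H) p (pf (iR k H) f) = pf l3 f := fun f => by
    rw [pf_pf]; congr 1
  have q3 : ∀ f, pf (H := H) q (pf (iR k H) f) = pf l3 f := fun f => by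
    rw [pf_pf]; congr 1
  have p1 : ∀ f, pf (H := H) p (pf (iL k H) f) = pf l12 (pf (iL k H) f) := fun f => by
    rw [pf_pf, pf_pf]; congr 1
  have q1 : ∀ f, pf (H := H) q (pf (iL k H) f) = pf l12 (pf (iR k H) f) := fun f => by
    rw [pf_pf, pf_pf]; congr 1
  have hc : pf l12 (pf (iR k H) (cι k H)) * cst H (l3 h) =
      cst H (l3 h) * pf l12 (pf (iR k H) (cι k H)) := by
    apply cst_comm
    intro a
    simp [pf, l12, l3]
  have hbs : ∀ f, pf l3 (cb β) * (pf l3 (cs β) * f) = f := fun f => by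
    rw [← mul_assoc, ← pf_mul, cb_mul_cs, pf_one, one_mul]
  congr 1
  simp only [Phi0, pf_mul, e3, e1, p3, q3, p1, q1, pf_comul_cι, mul_assoc, hbs]
  simp only [pf_cst]
  rw [← mul_assoc (cst H (l3 h)), ← hc, map_mul, ← cst_mul_cst]
  simp only [mul_assoc]

end beta
end CoreHopf

section Core2
open Coalgebra Bialgebra HopfAlgebra WithConv

variable {k}
variable {H : Type*} [Ring H] [HopfAlgebra k H]

/-- Hopf automorphisms -/
def HP (α : H ≃ₗ[k] H) : Prop :=
  (∀ a b, α (a * b) = α a * α b) ∧ α 1 = 1 ∧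
  (∀ a, comul (R := k) (α a) = TensorProduct.map α.toLinearMap α.toLinearMap (comul (R := k) a)) ∧
  (∀ a, counit (R := k) (α a) = counit (R := k) a) ∧
  (∀ a, antipode k (α a) = α (antipode k a))

lemma HP_one : HP (1 : H ≃ₗ[k] H) := by
  refine ⟨fun _ _ => rfl, rfl, fun a => ?_, fun _ => rfl, fun _ => rfl⟩
  change comul (R := k) a = TensorProduct.map LinearMap.id LinearMap.id (comul (R := k) a)
  simp

lemma HP_mul {α γ : H ≃ₗ[k] H} (hα : HP α) (hγ : HP γ) : HP (α * γ) := by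
  obtain ⟨a1, a2, a3, a4, a5⟩ := hα
  obtain ⟨b1, b2, b3, b4, b5⟩ := hγ
  refine ⟨fun a b => ?_, ?_, fun a => ?_, fun a => ?_, fun a => ?_⟩
  · simp [LinearEquiv.mul_apply, a1, b1]
  · simp [LinearEquiv.mul_apply, a2, b2]
  · rw [LinearEquiv.mul_apply, a3, b3, ← LinearMap.comp_apply, ← TensorProduct.map_comp]
    rfl
  · simp [LinearEquiv.mul_apply, a4, b4]
  · simp [LinearEquiv.mul_apply, a5, b5]

lemma HP_inv {α : H ≃ₗ[k] H} (hα : HP α) : HP α⁻¹ := by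
  obtain ⟨a1, a2, a3, a4, a5⟩ := hα
  change HP α.symm
  refine ⟨fun a b => ?_, ?_, fun a => ?_, fun a => ?_, fun a => ?_⟩
  · apply α.injective; simp [a1]
  · apply α.injective; simp [a2]
  · obtain ⟨b, rfl⟩ := α.surjective a
    rw [a3, ← LinearMap.comp_apply, ← TensorProduct.map_comp]
    simp
  · obtain ⟨b, rfl⟩ := α.surjective a
    simp [a4]
  · obtain ⟨b, rfl⟩ := α.surjective a
    simp [a5]

lemma HP_zpow {α : H ≃ₗ[k] H} (hα : HP α) (n : ℤ) : HP (α ^ n) := by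
  let G : Subgroup (H ≃ₗ[k] H) :=
    { carrier := {γ | HP γ}
      mul_mem' := fun h1 h2 => HP_mul h1 h2
      one_mem' := HP_one
      inv_mem' := fun h1 => HP_inv h1 }
  exact G.zpow_mem (x := α) hα n

/-- the bialgebra map of a Hopf automorphism -/
def HP.bh {α : H ≃ₗ[k] H} (hα : HP α) : H →ₐc[k] H :=
  BialgHom.ofAlgHom (AlgHom.ofLinearMap α.toLinearMap hα.2.1 hα.1)
    (by ext a; exact hα.2.2.2.1 a) (by ext a; exact (hα.2.2.1 a).symm)

lemma HP.bh_apply {α : H ≃ₗ[k] H} (hα : HP α) (a : H) : hα.bh a = α a := rfl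

lemma D3_alpha {α : H ≃ₗ[k] H} (hα : HP α) (a : H) :
    D3 k H (α a) = TensorProduct.map α.toLinearMap
      (TensorProduct.map α.toLinearMap α.toLinearMap) (D3 k H a) := by
  rw [D3_apply, D3_apply, hα.2.2.1]
  generalize comul (R := k) a = t
  induction t using TensorProduct.induction_on with
  | zero => simp
  | add s t hs ht => simp only [map_add, hs, ht]
  | tmul x y => simp [hα.2.2.1]

lemma F3_alpha {α : H ≃ₗ[k] H} (hα : HP α) (β : H →ₐc[k] H) (hβ : ∀ x, β (α x) = α (β x))
    (c : H) (t : H ⊗[k] (H ⊗[k] H)) :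
    F3 β (α c) (TensorProduct.map α.toLinearMap
      (TensorProduct.map α.toLinearMap α.toLinearMap) t) =
    TensorProduct.map α.toLinearMap α.toLinearMap (F3 β c t) := by
  induction t using TensorProduct.induction_on with
  | zero => simp
  | add s t hs ht => simp only [map_add, hs, ht]
  | tmul x t =>
    induction t using TensorProduct.induction_on with
    | zero => simp
    | add s t hs ht => simp only [map_add, TensorProduct.tmul_add, hs, ht]
    | tmul y z => simp [hβ, hα.1, hα.2.2.2.2]

lemma core1 {α : H ≃ₗ[k] H} (hα : HP α) (β : H →ₐc[k] H) (hβ : ∀ x, β (α x) = α (β x))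
    (μ : H →ₗ[k] H →ₗ[k] H) (hμ : ∀ a b, μ a b = α (a * b))
    (Δ : H →ₗ[k] H ⊗[k] H)
    (hΔ : ∀ a, Δ a = TensorProduct.map α.toLinearMap α.toLinearMap (comul (R := k) a))
    (Ψ : H ⊗[k] H →ₗ[k] H ⊗[k] H) (hΨ3 : ∀ c a, Ψ (c ⊗ₜ a) = F3 β c (D3 k H a)) :
    IsHomMonoidalEntwining k α μ 1 Δ counit α μ 1 Δ counit Ψ := by
  have hΨ : ∀ c a, Ψ (c ⊗ₜ a) = (Phi0 β c).ofConv a := fun c a => by rw [hΨ3, Phi0_eq_F3]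
  have hnat : ∀ c a, Ψ (α c ⊗ₜ α a) =
      TensorProduct.map α.toLinearMap α.toLinearMap (Ψ (c ⊗ₜ a)) := fun c a => by
    rw [hΨ3, hΨ3, D3_alpha hα, F3_alpha hα β hβ]
  refine ⟨⟨?_, ?_, ?_, ?_, fun h => C4 hΨ h⟩, ?_, fun a => C6 hΨ a⟩
  · ext c a
    simp [hnat]
  · apply TensorProduct.ext_threefold
    intro h a b
    simp only [LinearMap.comp_apply, TensorProduct.map_tmul, LinearEquiv.coe_coe,
      LinearMap.id_apply, TensorProduct.assoc_tmul, TensorProduct.lift.tmul, hμ, hnat]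
    rw [← C1 hΨ]
    generalize ((TensorProduct.assoc k H H H).symm (TensorProduct.map LinearMap.id Ψ
        (TensorProduct.assoc k H H H (Ψ (h ⊗ₜ a) ⊗ₜ[k] b)))) = t
    rw [← LinearMap.comp_apply, ← TensorProduct.map_comp]
    congr 2
    ext x y
    simp [hμ]
  · ext c a
    have hR : ∀ s : H ⊗[k] H, TensorProduct.assoc k H H H (TensorProduct.map Ψ LinearMap.id
      ((TensorProduct.assoc k H H H).symm (TensorProduct.map LinearMap.id Ψ
        (TensorProduct.assoc k H H H
          (TensorProduct.map α.toLinearMap α.toLinearMap s ⊗ₜ[k] α a))))) =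
        TensorProduct.map α.toLinearMap (TensorProduct.map α.toLinearMap α.toLinearMap)
        (TensorProduct.assoc k H H H (TensorProduct.map Ψ LinearMap.id
      ((TensorProduct.assoc k H H H).symm (TensorProduct.map LinearMap.id Ψ
        (TensorProduct.assoc k H H H (s ⊗ₜ[k] a)))))) := by
      intro s
      induction s using TensorProduct.induction_on with
      | zero => simp
      | add s t hs ht => simp only [map_add, TensorProduct.add_tmul, hs, ht]
      | tmul u v =>
        simp only [TensorProduct.map_tmul, LinearEquiv.coe_coe, TensorProduct.assoc_tmul,
          LinearMap.id_apply, hnat]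
        generalize Ψ (v ⊗ₜ a) = w
        induction w using TensorProduct.induction_on with
        | zero => simp
        | add s t hs ht => simp only [map_add, TensorProduct.tmul_add, hs, ht]
        | tmul p q =>
          simp only [TensorProduct.map_tmul, LinearEquiv.coe_coe, TensorProduct.assoc_symm_tmul,
            LinearMap.id_apply, hnat]
          generalize Ψ (u ⊗ₜ p) = w
          induction w using TensorProduct.induction_on with
          | zero => simp
          | add s t hs ht => simp only [map_add, TensorProduct.add_tmul, hs, ht]
          | tmul x y => simp
    simp only [TensorProduct.AlgebraTensorModule.curry_apply, TensorProduct.curry_apply,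
      LinearMap.coe_restrictScalars, LinearMap.comp_apply, TensorProduct.map_tmul,
      LinearEquiv.coe_coe, hΔ]
    have hT : (TensorProduct.map α.toLinearMap Δ : H ⊗[k] H →ₗ[k] _) =
        TensorProduct.map α.toLinearMap (TensorProduct.map α.toLinearMap α.toLinearMap) ∘ₗ
          TensorProduct.map LinearMap.id comul := by
      rw [← TensorProduct.map_comp]
      congr 1
      ext x
      simp [hΔ]
    rw [hR, ← C2 hΨ, hT, LinearMap.comp_apply]
  · ext c a
    simpa using C3 hΨ c a
  · apply TensorProduct.ext_threefold
    intro h g a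
    simp only [LinearMap.comp_apply, TensorProduct.map_tmul, LinearEquiv.coe_coe,
      LinearMap.id_apply, TensorProduct.lift.tmul, hμ, hΔ, hα.1]
    have hT : (TensorProduct.map Δ (α.toLinearMap ∘ₗ α.toLinearMap) : H ⊗[k] H →ₗ[k] _) =
        TensorProduct.map (TensorProduct.map α.toLinearMap α.toLinearMap)
          (α.toLinearMap ∘ₗ α.toLinearMap) ∘ₗ TensorProduct.map comul LinearMap.id := by
      rw [← TensorProduct.map_comp]
      congr 1
      ext x
      simp [hΔ]
    rw [hT, LinearMap.comp_apply, ← C5 hΨ]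
    generalize comul (R := k) a = t
    induction t using TensorProduct.induction_on with
    | zero => simp
    | add s t hs ht => simp only [map_add, TensorProduct.tmul_add, hs, ht]
    | tmul x y =>
      simp only [TensorProduct.map_tmul, LinearEquiv.coe_coe,
        TensorProduct.tensorTensorTensorComm_tmul, hnat]
      generalize Ψ (α h ⊗ₜ x) = w
      generalize Ψ (α g ⊗ₜ y) = v
      induction w using TensorProduct.induction_on with
      | zero => simp
      | add s t hs ht => simp only [map_add, TensorProduct.add_tmul, hs, ht]
      | tmul p q =>
        induction v using TensorProduct.induction_on with
        | zero => simp
        | add s t hs ht => simp only [map_add, TensorProduct.tmul_add, hs, ht]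
        | tmul p q => simp [hμ, hα.1]

lemma core2 (m : ℤ) {α : H ≃ₗ[k] H} (hα : HP α)
    (μ : H →ₗ[k] H →ₗ[k] H) (hμ : ∀ a b, μ a b = α (a * b))
    (Δ : H →ₗ[k] H ⊗[k] H)
    (hΔ : ∀ a, Δ a = TensorProduct.map α.toLinearMap α.toLinearMap (comul (R := k) a)) :
    IsHomMonoidalEntwining k α μ 1 Δ counit α μ 1 Δ counit
      (TensorProduct.map ((α ^ (-2 : ℤ)).toLinearMap)
          (TensorProduct.lift μ ∘ₗ
            TensorProduct.map (antipode k ∘ₗ (α ^ (m - 2)).toLinearMap)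
              (TensorProduct.lift μ ∘ₗ
                TensorProduct.map ((α ^ (-2 : ℤ)).toLinearMap)
                  ((α ^ (m - 4)).toLinearMap)))
        ∘ₗ (TensorProduct.leftComm k H H (H ⊗[k] H)).toLinearMap
        ∘ₗ TensorProduct.map (LinearMap.id : H →ₗ[k] H)
            (TensorProduct.leftComm k H H H).toLinearMap
        ∘ₗ (TensorProduct.leftComm k H H (H ⊗[k] H)).toLinearMap
        ∘ₗ TensorProduct.map (LinearMap.id : H →ₗ[k] H)
            (TensorProduct.map (LinearMap.id : H →ₗ[k] H) Δ)
        ∘ₗ TensorProduct.map (LinearMap.id : H →ₗ[k] H) Δ) := by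
  have hz : ∀ (n : ℤ) x, α ((α ^ n) x) = (α ^ (n + 1)) x := fun n x => by
    rw [add_comm, zpow_add, zpow_one]; rfl
  have hz2 : ∀ (n : ℤ) x, (α ^ n) (α x) = (α ^ (n + 1)) x := fun n x => by
    rw [zpow_add, zpow_one]; rfl
  refine core1 hα (HP_zpow hα m).bh (fun x => ?_) μ hμ Δ hΔ _ (fun c a => ?_)
  · rw [HP.bh_apply, HP.bh_apply, hz, hz2]
  have h1 : TensorProduct.map (LinearMap.id : H →ₗ[k] H) Δ (Δ a) =
      TensorProduct.map α.toLinearMap (TensorProduct.map (α.toLinearMap ∘ₗ α.toLinearMap)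
        (α.toLinearMap ∘ₗ α.toLinearMap)) (D3 k H a) := by
    rw [D3_apply, hΔ]
    generalize comul (R := k) a = t
    induction t using TensorProduct.induction_on with
    | zero => simp
    | add s t hs ht => simp only [map_add, hs, ht]
    | tmul x y =>
      simp only [TensorProduct.map_tmul, LinearMap.id_apply, LinearEquiv.coe_coe, hΔ, hα.2.2.1,
        TensorProduct.map_comp, LinearMap.comp_apply]
  simp only [LinearMap.comp_apply, TensorProduct.map_tmul, LinearMap.id_apply, h1]
  generalize D3 k H a = t
  induction t using TensorProduct.induction_on with
  | zero => simp
  | add s t hs ht => simp only [map_add, TensorProduct.tmul_add, hs, ht]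
  | tmul x t =>
    induction t using TensorProduct.induction_on with
    | zero => simp
    | add s t hs ht => simp only [map_add, TensorProduct.tmul_add, hs, ht]
    | tmul y z =>
      simp only [TensorProduct.map_tmul, LinearMap.comp_apply, LinearEquiv.coe_coe,
        TensorProduct.leftComm_tmul, LinearMap.id_apply, TensorProduct.lift.tmul, F3_tmul, hμ,
        HP.bh_apply, hα.1, ← hα.2.2.2.2, hz, hz2]
      congr 3 <;> ring_nf

end Core2
/-- for a Hom-Hopf algebra `H` and `m ∈ ℤ`, the map
`Φ(c ⊗ a) = α⁻²((a₂)₁) ⊗ S(α^{m-2}(a₁)) (α⁻²(c) α^{m-4}((a₂)₂))` is a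
Hom-monoidal entwining datum. -/
theorem hopf_yd_homMonoidalEntwining
    {H : Type*} [AddCommGroup H] [Module k H] (m : ℤ)
    (αH : H ≃ₗ[k] H) (μ : H →ₗ[k] H →ₗ[k] H) (e : H)
    (Δ : H →ₗ[k] H ⊗[k] H) (ε : H →ₗ[k] k) (S : H →ₗ[k] H)
    (hH : IsHomHopf k αH μ e Δ ε S) :
    IsHomMonoidalEntwining k αH μ e Δ ε αH μ e Δ ε
      (TensorProduct.map ((αH ^ (-2 : ℤ)).toLinearMap)
          (TensorProduct.lift μ ∘ₗ
            TensorProduct.map (S ∘ₗ (αH ^ (m - 2)).toLinearMap)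
              (TensorProduct.lift μ ∘ₗ
                TensorProduct.map ((αH ^ (-2 : ℤ)).toLinearMap)
                  ((αH ^ (m - 4)).toLinearMap)))
        ∘ₗ (TensorProduct.leftComm k H H (H ⊗[k] H)).toLinearMap
        ∘ₗ TensorProduct.map (LinearMap.id : H →ₗ[k] H)
            (TensorProduct.leftComm k H H H).toLinearMap
        ∘ₗ (TensorProduct.leftComm k H H (H ⊗[k] H)).toLinearMap
        ∘ₗ TensorProduct.map (LinearMap.id : H →ₗ[k] H)
            (TensorProduct.map (LinearMap.id : H →ₗ[k] H) Δ)
        ∘ₗ TensorProduct.map (LinearMap.id : H →ₗ[k] H) Δ) := by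
  obtain ⟨⟨⟨hm, has, h1, h1l, h1r⟩, ⟨hd, hε, hco, hcl, hcr⟩, hΔμ, hΔe, hεμ, hεe⟩, hS, hSl, hSr⟩ := hH
  have hsm : ∀ a b, αH.symm (μ a b) = μ (αH.symm a) (αH.symm b) := fun a b => by
    apply αH.injective; simp [hm]
  have hse : αH.symm e = e := by apply αH.injective; simp [h1]
  have hsε : ∀ a, ε (αH.symm a) = ε a := fun a => by rw [← hε]; simp
  let T : H ⊗[k] H →ₗ[k] H ⊗[k] H :=
    TensorProduct.map αH.symm.toLinearMap αH.symm.toLinearMap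
  let T' : H ⊗[k] H →ₗ[k] H ⊗[k] H :=
    TensorProduct.map αH.toLinearMap αH.toLinearMap
  have hTT : ∀ t, T (T' t) = t := fun t => by
    simp only [T, T', ← LinearMap.comp_apply, ← TensorProduct.map_comp]
    simp
  have hTT' : ∀ t, T' (T t) = t := fun t => by
    simp only [T, T', ← LinearMap.comp_apply, ← TensorProduct.map_comp]
    simp
  have hds : ∀ a, Δ (αH.symm a) = T (Δ a) := fun a => by
    obtain ⟨b, rfl⟩ := αH.surjective a
    rw [hd]
    simp only [LinearEquiv.symm_apply_apply]
    exact (hTT _).symm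
  have hSs : ∀ a, S (αH.symm a) = αH.symm (S a) := fun a => by
    apply αH.injective; rw [← hS]; simp
  have hcoass : ∀ a, TensorProduct.assoc k H H H
      (TensorProduct.map (T ∘ₗ Δ) LinearMap.id (T (Δ a))) =
      TensorProduct.map LinearMap.id (T ∘ₗ Δ) (T (Δ a)) := by
    intro a
    let σ2 : H →ₗ[k] H := αH.symm.toLinearMap ∘ₗ αH.symm.toLinearMap
    have t1 : ∀ s, TensorProduct.map LinearMap.id (T ∘ₗ Δ) (T s) =
        TensorProduct.map σ2 (T ∘ₗ T) (TensorProduct.map αH.toLinearMap Δ s) := by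
      intro s
      induction s using TensorProduct.induction_on with
      | zero => simp
      | add s t hs ht => simp only [map_add, hs, ht]
      | tmul u v =>
        have : T (u ⊗ₜ v) = αH.symm u ⊗ₜ αH.symm v := rfl
        rw [this]
        simp [σ2, hds]
    have t2 : ∀ s, TensorProduct.map (T ∘ₗ Δ) LinearMap.id (T s) =
        TensorProduct.map (T ∘ₗ T) σ2 (TensorProduct.map Δ αH.toLinearMap s) := by
      intro s
      induction s using TensorProduct.induction_on with
      | zero => simp
      | add s t hs ht => simp only [map_add, hs, ht]
      | tmul u v =>
        have : T (u ⊗ₜ v) = αH.symm u ⊗ₜ αH.symm v := rfl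
        rw [this]
        simp [σ2, hds]
    have t3 : ∀ t, TensorProduct.assoc k H H H (TensorProduct.map (T ∘ₗ T) σ2 t) =
        TensorProduct.map σ2 (T ∘ₗ T) (TensorProduct.assoc k H H H t) := by
      intro t
      induction t using TensorProduct.induction_on with
      | zero => simp
      | add s t hs ht => simp only [map_add, hs, ht]
      | tmul t w =>
        induction t using TensorProduct.induction_on with
        | zero => simp
        | add s t hs ht => simp only [map_add, TensorProduct.add_tmul, hs, ht]
        | tmul u v => simp [σ2, T]
    rw [t1, t2, t3, hco]
  have hcL : ∀ a, TensorProduct.map ε LinearMap.id (T (Δ a)) = (1 : k) ⊗ₜ[k] a := by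
    intro a
    apply (TensorProduct.lid k H).injective
    have : ∀ s, TensorProduct.lid k H (TensorProduct.map ε LinearMap.id (T s)) =
        αH.symm (TensorProduct.lid k H (TensorProduct.map ε LinearMap.id s)) := by
      intro s
      induction s using TensorProduct.induction_on with
      | zero => simp
      | add s t hs ht => simp only [map_add, hs, ht]
      | tmul u v => simp [T, hsε]
    rw [this, hcl]
    simp
  have hcR : ∀ a, TensorProduct.map LinearMap.id ε (T (Δ a)) = a ⊗ₜ[k] (1 : k) := by
    intro a
    apply (TensorProduct.rid k H).injective
    have : ∀ s, TensorProduct.rid k H (TensorProduct.map LinearMap.id ε (T s)) =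
        αH.symm (TensorProduct.rid k H (TensorProduct.map LinearMap.id ε s)) := by
      intro s
      induction s using TensorProduct.induction_on with
      | zero => simp
      | add s t hs ht => simp only [map_add, hs, ht]
      | tmul u v => simp [T, hsε]
    rw [this, hcr]
    simp
  let _ : Ring H :=
    { (inferInstance : AddCommGroup H) with
      mul := fun a b => αH.symm (μ a b)
      one := e
      left_distrib := fun a b c => by
        change αH.symm (μ a (b + c)) = αH.symm (μ a b) + αH.symm (μ a c)
        simp
      right_distrib := fun a b c => by
        change αH.symm (μ (a + b) c) = αH.symm (μ a c) + αH.symm (μ b c)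
        simp
      zero_mul := fun a => by
        change αH.symm (μ 0 a) = 0
        simp
      mul_zero := fun a => by
        change αH.symm (μ a 0) = 0
        simp
      mul_assoc := fun a b c => by
        change αH.symm (μ (αH.symm (μ a b)) c) = αH.symm (μ a (αH.symm (μ b c)))
        have := has (αH.symm a) (αH.symm b) (αH.symm c)
        simp only [LinearEquiv.apply_symm_apply] at this
        rw [hsm a b, hsm b c, this]
      one_mul := fun a => by
        change αH.symm (μ e a) = a
        simp [h1l]
      mul_one := fun a => by
        change αH.symm (μ a e) = a
        simp [h1r] }
  have hmul : ∀ a b : H, a * b = αH.symm (μ a b) := fun _ _ => rfl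
  have hone : (1 : H) = e := rfl
  let _ : Algebra k H := Algebra.ofModule
    (fun r x y => by rw [hmul, hmul]; simp) (fun r x y => by rw [hmul, hmul]; simp)
  let _ : Coalgebra k H :=
    { comul := T ∘ₗ Δ
      counit := ε
      coassoc := by
        ext a
        exact hcoass a
      rTensor_counit_comp_comul := by
        ext a
        exact hcL a
      lTensor_counit_comp_comul := by
        ext a
        exact hcR a }
  have hcomul : ∀ a : H, Coalgebra.comul (R := k) a = T (Δ a) := fun _ => rfl
  have hcounit : ∀ a : H, Coalgebra.counit (R := k) a = ε a := fun _ => rfl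
  let _ : Bialgebra k H := Bialgebra.mk' k H
    (by rw [hcounit]; exact hεe)
    (fun {a b} => by rw [hcounit, hcounit, hcounit, hmul, hsε, hεμ])
    (by
      rw [hcomul, hone, hΔe]
      simp only [T, TensorProduct.map_tmul, LinearEquiv.coe_coe, hse]
      rfl)
    (fun {a b} => by
      rw [hcomul, hcomul, hcomul, hmul, hds, hΔμ]
      generalize Δ a = s
      generalize Δ b = t
      induction s using TensorProduct.induction_on with
      | zero => simp
      | add s t hs ht => simp only [map_add, TensorProduct.add_tmul, add_mul, hs, ht]
      | tmul x y =>
        induction t using TensorProduct.induction_on with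
        | zero => simp
        | add s t hs ht => simp only [map_add, TensorProduct.tmul_add, mul_add, hs, ht]
        | tmul u v =>
          simp only [T, TensorProduct.tensorTensorTensorComm_tmul, TensorProduct.map_tmul,
            TensorProduct.lift.tmul, LinearEquiv.coe_coe, Algebra.TensorProduct.tmul_mul_tmul,
            hmul, hsm])
  let _ : HopfAlgebra k H :=
    { antipode := S
      mul_antipode_rTensor_comul := by
        ext a
        change LinearMap.mul' k H (TensorProduct.map S LinearMap.id (T (Δ a))) = algebraMap k H (ε a)
        have : ∀ s, LinearMap.mul' k H (TensorProduct.map S LinearMap.id (T s)) =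
            αH.symm (αH.symm (TensorProduct.lift μ (TensorProduct.map S LinearMap.id s))) := by
          intro s
          induction s using TensorProduct.induction_on with
          | zero => simp
          | add s t hs ht => simp only [map_add, hs, ht]
          | tmul u v =>
            simp only [T, TensorProduct.map_tmul, TensorProduct.lift.tmul, LinearEquiv.coe_coe,
              LinearMap.mul'_apply, LinearMap.id_apply, hmul, hsm, hSs]
        rw [this, hSl, Algebra.algebraMap_eq_smul_one, hone]
        simp only [map_smul, hse]
      mul_antipode_lTensor_comul := by
        ext a
        change LinearMap.mul' k H (TensorProduct.map LinearMap.id S (T (Δ a))) = algebraMap k H (ε a)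
        have : ∀ s, LinearMap.mul' k H (TensorProduct.map LinearMap.id S (T s)) =
            αH.symm (αH.symm (TensorProduct.lift μ (TensorProduct.map LinearMap.id S s))) := by
          intro s
          induction s using TensorProduct.induction_on with
          | zero => simp
          | add s t hs ht => simp only [map_add, hs, ht]
          | tmul u v =>
            simp only [T, TensorProduct.map_tmul, TensorProduct.lift.tmul, LinearEquiv.coe_coe,
              LinearMap.mul'_apply, LinearMap.id_apply, hmul, hsm, hSs]
        rw [this, hSr, Algebra.algebraMap_eq_smul_one, hone]
        simp only [map_smul, hse] }
  refine core2 (k := k) (H := H) m (α := αH) ⟨fun a b => ?_, h1, fun a => ?_, hε, hS⟩ μ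
    (fun a b => ?_) Δ (fun a => ?_)
  · rw [hmul, hmul, hsm (αH a)]; simp
  · rw [hcomul, hcomul, hd]
    exact (hTT _).trans (hTT' _).symm
  · rw [hmul]; simp
  · exact (hTT' _).symm
end
end

section
/- Let (H, α_H, S) be a Hom-Hopf algebra over a field k with α_H bijective, let i, j, p ∈ ℤ, and let (U,α_U), (V,α_V), (W,α_W) be p-th right-right Yetter-Drinfeld modules over H. Define τ_{X,Y} : X⊗Y → Y⊗X by τ_{X,Y}(x⊗y) = α_Y^{j-i-1}(y₍₀₎) ⊗ α_X^{i-j-1}(x)·α_H^{-p}(y₍₁₎), and define the associativity constraint a_{X,Y,Z} : (X⊗Y)⊗Z → X⊗(Y⊗Z) by a_{X,Y,Z}((x⊗y)⊗z) = α_X^{i+1}(x) ⊗ (y ⊗ α_Z^{-j-1}(z)). Then the Hom-Yang-Baxter equation holds as an equality of linear maps (U⊗V)⊗W → W⊗(V⊗U): (id_W⊗τ_{U,V}) ∘ a_{W,U,V} ∘ (τ_{U,W}⊗id_V) ∘ a_{U,W,V}^{-1} ∘ (id_U⊗τ_{V,W}) ∘ a_{U,V,W} = a_{W,V,U} ∘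 (τ_{V,W}⊗id_U) ∘ a_{V,W,U}^{-1} ∘ (id_V⊗τ_{U,W}) ∘ a_{V,U,W} ∘ (τ_{U,V}⊗id_W). -/
open TensorProduct BigOperators

noncomputable section

variable (k : Type*) [Field k]

section Aux

variable {k}
variable {H U V W M N : Type*} [AddCommGroup H] [Module k H] [AddCommGroup U] [Module k U]
    [AddCommGroup V] [Module k V] [AddCommGroup W] [Module k W]
    [AddCommGroup M] [Module k M] [AddCommGroup N] [Module k N]

lemma aux_zz (α : M ≃ₗ[k] M) (a b : ℤ) (x : M) : (α ^ a) ((α ^ b) x) = (α ^ (a + b)) x := by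
  rw [zpow_add]; rfl

lemma aux_zsymm (α : M ≃ₗ[k] M) (a : ℤ) : (α ^ a).symm = α ^ (-a) := by
  rw [zpow_neg]; rfl

lemma aux_symm (α : M ≃ₗ[k] M) : α.symm = α ^ (-1 : ℤ) := by
  rw [zpow_neg_one]; rfl

lemma aux_one (α : M ≃ₗ[k] M) (x : M) : α x = (α ^ (1 : ℤ)) x := by
  rw [zpow_one]

lemma aux_zpow (α : M ≃ₗ[k] M) (β : N ≃ₗ[k] N) (f : M →ₗ[k] N)
    (h : ∀ x, f (α x) = β (f x)) (z : ℤ) (x : M) : f ((α ^ z) x) = (β ^ z) (f x) := by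
  induction z using Int.induction_on generalizing x with
  | zero => simp
  | succ n ih =>
    have := ih (α x)
    rw [aux_one α, aux_zz, ← aux_one, h, aux_one β, aux_zz] at this
    exact this
  | pred n ih =>
    have := ih (α.symm x)
    have h2 : f (α.symm x) = β.symm (f x) := by
      rw [LinearEquiv.eq_symm_apply, ← h]; simp
    rw [h2, aux_symm, aux_symm, aux_zz, aux_zz] at this
    exact this

lemma aux_zpow_act (αH : H ≃ₗ[k] H) (αU : U ≃ₗ[k] U) (act : U →ₗ[k] H →ₗ[k] U)
    (h : ∀ u a, αU (act u a) = act (αU u) (αH a)) (z : ℤ) (u : U) (a : H) :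
    (αU ^ z) (act u a) = act ((αU ^ z) u) ((αH ^ z) a) := by
  have := aux_zpow (TensorProduct.congr αU αH) αU (TensorProduct.lift act) (by
    intro x
    induction x using TensorProduct.induction_on with
    | zero => simp
    | tmul x y => simp [h]
    | add x y hx hy => simp only [map_add, hx, hy]) z (u ⊗ₜ a)
  rw [TensorProduct.congr_zpow] at this
  simpa using this.symm

lemma aux_zpow_rho (αH : H ≃ₗ[k] H) (αU : U ≃ₗ[k] U) (ρ : U →ₗ[k] U ⊗[k] H)
    (h : ∀ u, ρ (αU u) = TensorProduct.map αU.toLinearMap αH.toLinearMap (ρ u)) (z : ℤ) (u : U) :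
    ρ ((αU ^ z) u) = TensorProduct.map (αU ^ z).toLinearMap (αH ^ z).toLinearMap (ρ u) := by
  have := aux_zpow αU (TensorProduct.congr αU αH) ρ (by
    intro x; rw [h]; rfl) z u
  rw [TensorProduct.congr_zpow] at this
  exact this

/-- the map `(v₀ ⊗ v₁) ↦ (h₁ ⊗ h₂) ↦ v₀ h₁ ⊗ v₁ h₂` -/
def auxG (act : V →ₗ[k] H →ₗ[k] V) (m : H →ₗ[k] H →ₗ[k] H) :
    V ⊗[k] H →ₗ[k] H ⊗[k] H →ₗ[k] V ⊗[k] H :=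
  TensorProduct.lift ((TensorProduct.mapBilinear (RingHom.id k) H H V H).compl₁₂ act m)

@[simp] lemma auxG_tmul (act : V →ₗ[k] H →ₗ[k] V) (m : H →ₗ[k] H →ₗ[k] H) (v : V) (a b c : H) :
    auxG act m (v ⊗ₜ a) (b ⊗ₜ c) = act v b ⊗ₜ m a c := by
  simp [auxG]

/-- the map `(a ⊗ b) ↦ (v b)₀ ⊗ a (v b)₁` -/
def auxT (act : V →ₗ[k] H →ₗ[k] V) (m : H →ₗ[k] H →ₗ[k] H) (ρ : V →ₗ[k] V ⊗[k] H) (v : V) :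
    H ⊗[k] H →ₗ[k] V ⊗[k] H :=
  TensorProduct.lift (((TensorProduct.mapBilinear (RingHom.id k) V H V H) LinearMap.id ∘ₗ m).compl₂ (ρ ∘ₗ act v))

@[simp] lemma auxT_tmul (act : V →ₗ[k] H →ₗ[k] V) (m : H →ₗ[k] H →ₗ[k] H) (ρ : V →ₗ[k] V ⊗[k] H)
    (v : V) (a b : H) :
    auxT act m ρ v (a ⊗ₜ b) = TensorProduct.map LinearMap.id (m a) (ρ (act v b)) := by
  simp [auxT]

/-- Yetter-Drinfeld right-hand side: `v₀ b₂ ⊗ S(b₁)(v₁ b₃)`. -/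
def auxY (act : V →ₗ[k] H →ₗ[k] V) (m : H →ₗ[k] H →ₗ[k] H) (S : H →ₗ[k] H) :
    V ⊗[k] H →ₗ[k] H ⊗[k] (H ⊗[k] H) →ₗ[k] V ⊗[k] H :=
  TensorProduct.lift
    ((LinearMap.mk₂ k (fun v a => TensorProduct.lift
      (((TensorProduct.mapBilinear (RingHom.id k) V H V H LinearMap.id ∘ₗ m ∘ₗ S)).compl₂
        (auxG act m (v ⊗ₜ a)))))
      (by intros; ext; simp [TensorProduct.add_tmul])
      (by intros; ext; simp [TensorProduct.smul_tmul'])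
      (by intros; ext; simp [TensorProduct.tmul_add])
      (by intros; ext; simp))

@[simp] lemma auxY_tmul (act : V →ₗ[k] H →ₗ[k] V) (m : H →ₗ[k] H →ₗ[k] H) (S : H →ₗ[k] H)
    (v : V) (a b c d : H) :
    auxY act m S (v ⊗ₜ a) (b ⊗ₜ (c ⊗ₜ d)) = act v c ⊗ₜ m (S b) (m a d) := by
  simp [auxY]

lemma aux_yd (act : V →ₗ[k] H →ₗ[k] V) (m : H →ₗ[k] H →ₗ[k] H) (e : H)
    (Δ : H →ₗ[k] H ⊗[k] H) (ε : H →ₗ[k] k) (S : H →ₗ[k] H) (ρ : V →ₗ[k] V ⊗[k] H)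
    (hm : ∀ a b c, m a (m b c) = m (m a b) c) (he : ∀ a, m e a = a)
    (hΔ : ∀ c, TensorProduct.map LinearMap.id Δ (Δ c)
      = TensorProduct.assoc k H H H (TensorProduct.map Δ LinearMap.id (Δ c)))
    (hε : ∀ c, TensorProduct.lid k H (TensorProduct.map ε (LinearMap.id : H →ₗ[k] H) (Δ c)) = c)
    (hS : ∀ h, TensorProduct.lift m
      (TensorProduct.map (LinearMap.id : H →ₗ[k] H) S (Δ h)) = ε h • e)
    (hyd : ∀ v h, ρ (act v h) = auxY act m S (ρ v) (TensorProduct.map LinearMap.id Δ (Δ h)))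
    (v : V) (h : H) : auxT act m ρ v (Δ h) = auxG act m (ρ v) (Δ h) := by
  -- `P t (a ⊗ x) = (id ⊗ m a) (auxY t x)`
  let Q : V ⊗[k] H →ₗ[k] H →ₗ[k] H ⊗[k] (H ⊗[k] H) →ₗ[k] V ⊗[k] H :=
    LinearMap.mk₂ k (fun t a => TensorProduct.map LinearMap.id (m a) ∘ₗ auxY act m S t)
      (by intros; simp [LinearMap.comp_add])
      (by intros; simp [LinearMap.comp_smul])
      (by intros; simp [TensorProduct.map_add_right, LinearMap.add_comp])
      (by intros; simp [TensorProduct.map_smul_right, LinearMap.smul_comp])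
  let P : V ⊗[k] H → H ⊗[k] (H ⊗[k] (H ⊗[k] H)) →ₗ[k] V ⊗[k] H := fun t =>
    TensorProduct.lift (Q t)
  have h1 : ∀ x, auxT act m ρ v x = P (ρ v) (TensorProduct.map LinearMap.id
      (TensorProduct.map LinearMap.id Δ ∘ₗ Δ) x) := by
    intro x
    induction x using TensorProduct.induction_on with
    | zero => simp
    | add x y hx hy => simp only [map_add, hx, hy]
    | tmul a b => simp [P, Q, hyd]
  have h2 : TensorProduct.map LinearMap.id (TensorProduct.map LinearMap.id Δ ∘ₗ Δ) (Δ h)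
      = TensorProduct.map LinearMap.id (TensorProduct.map LinearMap.id Δ)
        (TensorProduct.assoc k H H H (TensorProduct.map Δ LinearMap.id (Δ h))) := by
    rw [← hΔ]
    generalize Δ h = x
    induction x using TensorProduct.induction_on with
    | zero => simp
    | add x y hx hy => simp only [map_add, hx, hy]
    | tmul a b => simp
  rw [h1, h2]
  generalize ρ v = t
  induction t using TensorProduct.induction_on with
  | zero =>
    have : P 0 = 0 := by ext; simp [P]
    rw [this]; simp
  | add x y hx hy =>
    have : P (x + y) = P x + P y := by ext; simp [P]
    rw [this, LinearMap.add_apply, hx, hy]; simp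
  | tmul v₀ v₁ =>
    have h3 : ∀ y : H ⊗[k] H, ∀ z : H ⊗[k] H, 
        P (v₀ ⊗ₜ v₁) (TensorProduct.assoc k H H _ (y ⊗ₜ z)) =
        TensorProduct.map LinearMap.id (m (TensorProduct.lift m (TensorProduct.map LinearMap.id S y)))
          (auxG act m (v₀ ⊗ₜ v₁) z) := by
      intro y z
      induction y using TensorProduct.induction_on with
      | zero => simp [TensorProduct.map_zero_right]
      | add x y hx hy => simp only [TensorProduct.add_tmul, map_add, hx, hy, TensorProduct.map_add_right, LinearMap.add_apply]
      | tmul a b => 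
        induction z using TensorProduct.induction_on with
        | zero => simp
        | add x y hx hy => simp only [TensorProduct.tmul_add, map_add, hx, hy]
        | tmul c d => simp [P, Q, hm]
    have he' : m e = LinearMap.id := by ext; simp [he]
    have h4 : ∀ x, P (v₀ ⊗ₜ v₁) (TensorProduct.map LinearMap.id (TensorProduct.map LinearMap.id Δ)
        (TensorProduct.assoc k H H H (TensorProduct.map Δ LinearMap.id x))) =
        auxG act m (v₀ ⊗ₜ v₁) (Δ (TensorProduct.lid k H (TensorProduct.map ε (LinearMap.id : H →ₗ[k] H) x))) := by
      intro x
      induction x using TensorProduct.induction_on with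
      | zero => simp
      | add x y hx hy => simp only [map_add, hx, hy]
      | tmul a b =>
        have : TensorProduct.map LinearMap.id (TensorProduct.map LinearMap.id Δ)
          (TensorProduct.assoc k H H H (TensorProduct.map Δ LinearMap.id (a ⊗ₜ b)))
          = TensorProduct.assoc k H H _ (Δ a ⊗ₜ Δ b) := by
          simp only [TensorProduct.map_tmul, LinearMap.id_apply]
          generalize Δ a = y
          induction y using TensorProduct.induction_on with
          | zero => simp
          | add x y hx hy => simp only [TensorProduct.add_tmul, map_add, hx, hy]
          | tmul a b => simp
        rw [this, h3, hS]
        simp [TensorProduct.map_smul_right, he']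
    rw [h4, hε]

lemma aux_homAssoc (i j : ℤ) (αU : U ≃ₗ[k] U) (αW : W ≃ₗ[k] W) (u : U) (v : V) (w : W) :
    homAssoc k i j (Y := V) αU αW ((u ⊗ₜ v) ⊗ₜ w) =
      (αU ^ (i + 1)) u ⊗ₜ (v ⊗ₜ (αW ^ (-j - 1)) w) := by
  simp [homAssoc]

lemma aux_homAssoc_symm (i j : ℤ) (αU : U ≃ₗ[k] U) (αW : W ≃ₗ[k] W) (u : U) (v : V) (w : W) :
    (homAssoc k i j (Y := V) αU αW).symm (u ⊗ₜ (v ⊗ₜ w)) =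
      ((αU ^ (-(i + 1))) u ⊗ₜ v) ⊗ₜ (αW ^ (j + 1)) w := by
  rw [LinearEquiv.symm_apply_eq, aux_homAssoc, aux_zz, aux_zz]
  simp

lemma aux_core (i j : ℤ) (αH : H ≃ₗ[k] H) (m : H →ₗ[k] H →ₗ[k] H) (Δ : H →ₗ[k] H ⊗[k] H)
    (hmα : ∀ (z : ℤ) a b, (αH ^ z) (m a b) = m ((αH ^ z) a) ((αH ^ z) b))
    (hΔα : ∀ (z : ℤ) a, Δ ((αH ^ z) a) =
      TensorProduct.map (αH ^ z).toLinearMap (αH ^ z).toLinearMap (Δ a))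
    (αU : U ≃ₗ[k] U) (actU : U →ₗ[k] H →ₗ[k] U)
    (hUα : ∀ (z : ℤ) a b, (αU ^ z) (actU a b) = actU ((αU ^ z) a) ((αH ^ z) b))
    (hU : ∀ u a b, actU (actU u a) b = actU u (m a b))
    (αV : V ≃ₗ[k] V) (actV : V →ₗ[k] H →ₗ[k] V) (ρV : V →ₗ[k] V ⊗[k] H)
    (hVα : ∀ (z : ℤ) a b, (αV ^ z) (actV a b) = actV ((αV ^ z) a) ((αH ^ z) b))
    (hVρ : ∀ (z : ℤ) a, ρV ((αV ^ z) a) =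
      TensorProduct.map (αV ^ z).toLinearMap (αH ^ z).toLinearMap (ρV a))
    (hV : ∀ v h, auxT actV m ρV v (Δ h) = auxG actV m (ρV v) (Δ h))
    (αW : W ≃ₗ[k] W) (ρW : W →ₗ[k] W ⊗[k] H)
    (hWρ : ∀ (z : ℤ) a, ρW ((αW ^ z) a) =
      TensorProduct.map (αW ^ z).toLinearMap (αH ^ z).toLinearMap (ρW a))
    (hW : ∀ u, TensorProduct.map LinearMap.id Δ (ρW u)
      = TensorProduct.assoc k W H H (TensorProduct.map ρW LinearMap.id (ρW u)))
    (τUV : U ⊗[k] V →ₗ[k] V ⊗[k] U) (τUW : U ⊗[k] W →ₗ[k] W ⊗[k] U)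
    (τVW : V ⊗[k] W →ₗ[k] W ⊗[k] V)
    (hUV : ∀ x y, τUV (x ⊗ₜ y) = TensorProduct.map (αV ^ (j - i)).toLinearMap
      (actU ((αU ^ (i - j)) x)) (ρV y))
    (hUW : ∀ x y, τUW (x ⊗ₜ y) = TensorProduct.map (αW ^ (j - i)).toLinearMap
      (actU ((αU ^ (i - j)) x)) (ρW y))
    (hVW : ∀ x y, τVW (x ⊗ₜ y) = TensorProduct.map (αW ^ (j - i)).toLinearMap
      (actV ((αV ^ (i - j)) x)) (ρW y)) :
    TensorProduct.map (LinearMap.id : W →ₗ[k] W) τUV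
        ∘ₗ (homAssoc k i j (Y := U) αW αV).toLinearMap
        ∘ₗ TensorProduct.map τUW (LinearMap.id : V →ₗ[k] V)
        ∘ₗ (homAssoc k i j (Y := W) αU αV).symm.toLinearMap
        ∘ₗ TensorProduct.map (LinearMap.id : U →ₗ[k] U) τVW
        ∘ₗ (homAssoc k i j (Y := V) αU αW).toLinearMap
      = (homAssoc k i j (Y := V) αW αU).toLinearMap
        ∘ₗ TensorProduct.map τVW (LinearMap.id : U →ₗ[k] U)
        ∘ₗ (homAssoc k i j (Y := W) αV αU).symm.toLinearMap
        ∘ₗ TensorProduct.map (LinearMap.id : V →ₗ[k] V) τUW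
        ∘ₗ (homAssoc k i j (Y := U) αV αW).toLinearMap
        ∘ₗ TensorProduct.map τUV (LinearMap.id : W →ₗ[k] W) := by
  apply TensorProduct.ext_threefold
  intro u v w
  simp only [LinearMap.comp_apply, LinearEquiv.coe_coe, aux_homAssoc, TensorProduct.map_tmul,
    LinearMap.id_apply, hVW, hUV]
  rw [hWρ]
  -- the left-hand side
  have hL : ∀ t : W ⊗[k] H,
      TensorProduct.map (LinearMap.id : W →ₗ[k] W) τUV (homAssoc k i j (Y := U) αW αV
        (TensorProduct.map τUW (LinearMap.id : V →ₗ[k] V)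
        ((homAssoc k i j (Y := W) αU αV).symm
          ((αU ^ (i + 1)) u ⊗ₜ TensorProduct.map (αW ^ (j - i)).toLinearMap
            (actV ((αV ^ (i - j)) v)) (TensorProduct.map (αW ^ (-j - 1)).toLinearMap
              (αH ^ (-j - 1)).toLinearMap t)))))
      = TensorProduct.map (αW ^ (j - i)).toLinearMap
          (τUV ∘ₗ TensorProduct.map (actU ((αU ^ (i - j)) u) ∘ₗ (αH ^ (-i - 1)).toLinearMap)
            (actV ((αV ^ (i - j)) v) ∘ₗ (αH ^ (-j - 1)).toLinearMap))
          (TensorProduct.assoc k W H H (TensorProduct.map ρW LinearMap.id t)) := by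
    intro t
    induction t using TensorProduct.induction_on with
    | zero => simp
    | add x y hx hy => simp only [map_add, TensorProduct.tmul_add, hx, hy]
    | tmul w₀ b =>
      simp only [TensorProduct.map_tmul, LinearEquiv.coe_coe, aux_homAssoc_symm, LinearMap.id_apply,
        aux_zz, hUW, hWρ]
      generalize ρW w₀ = s
      induction s using TensorProduct.induction_on with
      | zero => simp
      | add x y hx hy => simp only [map_add, TensorProduct.add_tmul, hx, hy]
      | tmul w₁ a =>
        simp only [TensorProduct.map_tmul, LinearEquiv.coe_coe, aux_homAssoc, LinearMap.id_apply,
          TensorProduct.assoc_tmul, LinearMap.comp_apply, hVα, aux_zz]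
        ring_nf
  rw [hL, ← hW]
  -- the right-hand side
  let R : V ⊗[k] H →ₗ[k] H ⊗[k] H →ₗ[k] V ⊗[k] U := 
    LinearMap.compr₂ (auxG actV m) (TensorProduct.map LinearMap.id
      (actU ((αU ^ (2 * (i - j))) u) ∘ₗ (αH ^ (i - j)).toLinearMap)) |>.compl₂
      (TensorProduct.map (αH ^ (-i - 1)).toLinearMap (αH ^ (-i - 1)).toLinearMap)
  have hR : ∀ t : V ⊗[k] H,
      homAssoc k i j (Y := V) αW αU (TensorProduct.map τVW (LinearMap.id : U →ₗ[k] U)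
        ((homAssoc k i j (Y := W) αV αU).symm
        (TensorProduct.map (LinearMap.id : V →ₗ[k] V) τUW
        (homAssoc k i j (Y := U) αV αW
        (TensorProduct.map (αV ^ (j - i)).toLinearMap (actU ((αU ^ (i - j)) u)) t ⊗ₜ w)))))
      = TensorProduct.map (αW ^ (j - i)).toLinearMap (R t)
          (TensorProduct.map LinearMap.id Δ (ρW w)) := by
    intro t
    induction t using TensorProduct.induction_on with
    | zero => simp [TensorProduct.map_zero_right]
    | add x y hx hy => simp only [map_add, TensorProduct.add_tmul, hx, hy, TensorProduct.map_add_right, LinearMap.add_apply]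
    | tmul v₀ v₁ =>
      simp only [TensorProduct.map_tmul, LinearEquiv.coe_coe, aux_homAssoc, LinearMap.id_apply,
        aux_zz, hUW, hWρ]
      rw [hW]
      generalize ρW w = s
      induction s using TensorProduct.induction_on with
      | zero => simp
      | add x y hx hy => simp only [map_add, TensorProduct.tmul_add, hx, hy]
      | tmul w₀ b =>
        simp only [TensorProduct.map_tmul, LinearEquiv.coe_coe, aux_homAssoc_symm,
          LinearMap.id_apply, aux_zz, hVW, hWρ]
        generalize ρW w₀ = s
        induction s using TensorProduct.induction_on with
        | zero => simp
        | add x y hx hy => simp only [map_add, TensorProduct.add_tmul, hx, hy]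
        | tmul w₁ a =>
          simp only [R, TensorProduct.map_tmul, LinearEquiv.coe_coe, aux_homAssoc,
            LinearMap.id_apply, LinearMap.compl₂_apply, LinearMap.compr₂_apply, auxG_tmul,
            TensorProduct.assoc_tmul, LinearMap.comp_apply, hUα, hmα, hU, aux_zz]
          ring_nf
          simp
  rw [hR]
  generalize ρW w = s
  induction s using TensorProduct.induction_on with
  | zero => simp
  | add x y hx hy => simp only [map_add, hx, hy]
  | tmul w₀ h =>
    simp only [TensorProduct.map_tmul, LinearMap.comp_apply]
    congr 1
    simp only [R, LinearMap.compl₂_apply, LinearMap.compr₂_apply]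
    rw [← hΔα, ← hV, hΔα]
    generalize Δ h = s
    induction s using TensorProduct.induction_on with
    | zero => simp
    | add x y hx hy => simp only [map_add, hx, hy]
    | tmul a b =>
      have e1 : (actV ((αV ^ (i - j)) v)) ((αH ^ (-j - 1)) b) =
          (αV ^ (i - j)) (actV v ((αH ^ (-i - 1)) b)) := by
        rw [hVα, aux_zz]; ring_nf
      simp only [TensorProduct.map_tmul, LinearMap.comp_apply, LinearEquiv.coe_coe, hUV, auxT_tmul,
        e1, hVρ]
      generalize ρV _ = s
      induction s using TensorProduct.induction_on with
      | zero => simp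
      | add x y hx hy => simp only [map_add, hx, hy]
      | tmul c d =>
        simp only [TensorProduct.map_tmul, LinearMap.comp_apply, LinearEquiv.coe_coe, hUα, aux_zz,
          LinearMap.id_apply, hmα, hU]
        ring_nf
        simp

/-- untwisted action (or multiplication) -/
def unAct (αU : U ≃ₗ[k] U) (act : U →ₗ[k] H →ₗ[k] U) : U →ₗ[k] H →ₗ[k] U :=
  act.compr₂ (αU ^ (-1 : ℤ)).toLinearMap

/-- untwisted coaction (or comultiplication, for `p = 2`) -/
def unRho (p : ℤ) (αH : H ≃ₗ[k] H) (αU : U ≃ₗ[k] U) (ρ : U →ₗ[k] U ⊗[k] H) : U →ₗ[k] U ⊗[k] H :=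
  TensorProduct.map (αU ^ (-1 : ℤ)).toLinearMap (αH ^ (1 - p)).toLinearMap ∘ₗ ρ

lemma unAct_apply (αU : U ≃ₗ[k] U) (act : U →ₗ[k] H →ₗ[k] U) (u : U) (h : H) :
    unAct αU act u h = (αU ^ (-1 : ℤ)) (act u h) := rfl

lemma unRho_apply (p : ℤ) (αH : H ≃ₗ[k] H) (αU : U ≃ₗ[k] U) (ρ : U →ₗ[k] U ⊗[k] H) (u : U) :
    unRho p αH αU ρ u =
      TensorProduct.map (αU ^ (-1 : ℤ)).toLinearMap (αH ^ (1 - p)).toLinearMap (ρ u) := rfl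

lemma unAct_zpow (αH : H ≃ₗ[k] H) (αU : U ≃ₗ[k] U) (act : U →ₗ[k] H →ₗ[k] U)
    (h : ∀ (z : ℤ) u a, (αU ^ z) (act u a) = act ((αU ^ z) u) ((αH ^ z) a)) (z : ℤ) (u : U) (a : H) :
    (αU ^ z) (unAct αU act u a) = unAct αU act ((αU ^ z) u) ((αH ^ z) a) := by
  simp only [unAct_apply, h, aux_zz]
  ring_nf

lemma unRho_zpow (p : ℤ) (αH : H ≃ₗ[k] H) (αU : U ≃ₗ[k] U) (ρ : U →ₗ[k] U ⊗[k] H)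
    (h : ∀ (z : ℤ) u, ρ ((αU ^ z) u) =
      TensorProduct.map (αU ^ z).toLinearMap (αH ^ z).toLinearMap (ρ u)) (z : ℤ) (u : U) :
    unRho p αH αU ρ ((αU ^ z) u) =
      TensorProduct.map (αU ^ z).toLinearMap (αH ^ z).toLinearMap (unRho p αH αU ρ u) := by
  simp only [unRho_apply, h]
  generalize ρ u = s
  induction s using TensorProduct.induction_on with
  | zero => simp
  | add x y hx hy => simp only [map_add, hx, hy]
  | tmul a b =>
    simp only [TensorProduct.map_tmul, LinearEquiv.coe_coe, aux_zz]
    ring_nf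

lemma unRho_coassoc (p : ℤ) (αH : H ≃ₗ[k] H) (Δ : H →ₗ[k] H ⊗[k] H)
    (αU : U ≃ₗ[k] U) (ρ : U →ₗ[k] U ⊗[k] H)
    (hΔ : ∀ (z : ℤ) a, Δ ((αH ^ z) a) =
      TensorProduct.map (αH ^ z).toLinearMap (αH ^ z).toLinearMap (Δ a))
    (hρ : ∀ (z : ℤ) u, ρ ((αU ^ z) u) =
      TensorProduct.map (αU ^ z).toLinearMap (αH ^ z).toLinearMap (ρ u))
    (h : ∀ u, TensorProduct.map αU.toLinearMap Δ (ρ u)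
      = TensorProduct.assoc k U H H (TensorProduct.map ρ αH.toLinearMap (ρ u))) (u : U) :
    TensorProduct.map LinearMap.id (unRho 2 αH αH Δ) (unRho p αH αU ρ u)
      = TensorProduct.assoc k U H H
        (TensorProduct.map (unRho p αH αU ρ) LinearMap.id (unRho p αH αU ρ u)) := by
  have h1 : ∀ s : U ⊗[k] H, TensorProduct.map LinearMap.id (unRho 2 αH αH Δ)
      (TensorProduct.map (αU ^ (-1 : ℤ)).toLinearMap (αH ^ (1 - p)).toLinearMap s) =
      TensorProduct.map (αU ^ (-2 : ℤ)).toLinearMap (TensorProduct.map (αH ^ (-p)).toLinearMap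
        (αH ^ (-p)).toLinearMap) (TensorProduct.map αU.toLinearMap Δ s) := by
    intro s
    induction s using TensorProduct.induction_on with
    | zero => simp
    | add x y hx hy => simp only [map_add, hx, hy]
    | tmul a b =>
      simp only [TensorProduct.map_tmul, LinearEquiv.coe_coe, LinearMap.id_apply, unRho_apply, hΔ]
      rw [aux_one αU a, aux_zz]
      generalize Δ b = s
      induction s using TensorProduct.induction_on with
      | zero => simp
      | add x y hx hy => simp only [map_add, TensorProduct.tmul_add, hx, hy]
      | tmul c d =>
        simp only [TensorProduct.map_tmul, LinearEquiv.coe_coe, aux_zz]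
        ring_nf
  have h2 : ∀ s : U ⊗[k] H, TensorProduct.assoc k U H H
      (TensorProduct.map (unRho p αH αU ρ) LinearMap.id
      (TensorProduct.map (αU ^ (-1 : ℤ)).toLinearMap (αH ^ (1 - p)).toLinearMap s)) =
      TensorProduct.map (αU ^ (-2 : ℤ)).toLinearMap (TensorProduct.map (αH ^ (-p)).toLinearMap
        (αH ^ (-p)).toLinearMap)
        (TensorProduct.assoc k U H H (TensorProduct.map ρ αH.toLinearMap s)) := by
    intro s
    induction s using TensorProduct.induction_on with
    | zero => simp
    | add x y hx hy => simp only [map_add, hx, hy]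
    | tmul a b =>
      simp only [TensorProduct.map_tmul, LinearEquiv.coe_coe, LinearMap.id_apply, unRho_apply, hρ]
      rw [aux_one αH b]
      generalize ρ a = s
      induction s using TensorProduct.induction_on with
      | zero => simp
      | add x y hx hy => simp only [map_add, TensorProduct.add_tmul, hx, hy]
      | tmul c d =>
        simp only [TensorProduct.map_tmul, LinearEquiv.coe_coe, aux_zz, TensorProduct.assoc_tmul]
        ring_nf
  rw [unRho_apply p, h1, h2, h]

lemma aux_tau (p i j : ℤ) (αH : H ≃ₗ[k] H) (αU : U ≃ₗ[k] U) (αV : V ≃ₗ[k] V)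
    (act : U →ₗ[k] H →ₗ[k] U) (ρ : V →ₗ[k] V ⊗[k] H)
    (h : ∀ (z : ℤ) u a, (αU ^ z) (act u a) = act ((αU ^ z) u) ((αH ^ z) a)) (x : U) (y : V) :
    ydTau k p i j αH αU αV act ρ (x ⊗ₜ y) = TensorProduct.map (αV ^ (j - i)).toLinearMap
      (unAct αU act ((αU ^ (i - j)) x)) (unRho p αH αV ρ y) := by
  simp only [ydTau, LinearMap.comp_apply, TensorProduct.map_tmul, LinearMap.id_apply, unRho_apply]
  generalize ρ y = s
  induction s using TensorProduct.induction_on with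
  | zero => simp
  | add x y hx hy => simp only [map_add, TensorProduct.tmul_add, hx, hy]
  | tmul c d =>
    simp only [TensorProduct.map_tmul, LinearEquiv.coe_coe, aux_zz, TensorProduct.leftComm_tmul,
      LinearMap.comp_apply, TensorProduct.lift.tmul, unAct_apply, h]
    ring_nf

lemma unAct_assoc (αH : H ≃ₗ[k] H) (μ : H →ₗ[k] H →ₗ[k] H) (αU : U ≃ₗ[k] U)
    (act : U →ₗ[k] H →ₗ[k] U)
    (h : ∀ (z : ℤ) u a, (αU ^ z) (act u a) = act ((αU ^ z) u) ((αH ^ z) a))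
    (ha : ∀ u a b, act (act u a) (αH b) = act (αU u) (μ a b)) (u : U) (a b : H) :
    unAct αU act (unAct αU act u a) b = unAct αU act u (unAct αH μ a b) := by
  have := congrArg (αU ^ (-2 : ℤ)) (ha u a b)
  rw [h, aux_one αH, aux_zz, h (-2) (αU u), aux_one αU, aux_zz] at this
  rw [unAct_apply, unAct_apply, unAct_apply, unAct_apply, h, aux_zz, h (-1) u, aux_zz]
  exact this

lemma unYD (p : ℤ) (αH : H ≃ₗ[k] H) (μ : H →ₗ[k] H →ₗ[k] H) (e : H)
    (Δ : H →ₗ[k] H ⊗[k] H) (ε : H →ₗ[k] k) (S : H →ₗ[k] H)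
    (αV : V ≃ₗ[k] V) (act : V →ₗ[k] H →ₗ[k] V) (ρ : V →ₗ[k] V ⊗[k] H)
    (hμα : ∀ (z : ℤ) u a, (αH ^ z) (μ u a) = μ ((αH ^ z) u) ((αH ^ z) a))
    (hΔα : ∀ (z : ℤ) a, Δ ((αH ^ z) a) =
      TensorProduct.map (αH ^ z).toLinearMap (αH ^ z).toLinearMap (Δ a))
    (hSα : ∀ (z : ℤ) a, S ((αH ^ z) a) = (αH ^ z) (S a))
    (h : ∀ (z : ℤ) u a, (αV ^ z) (act u a) = act ((αV ^ z) u) ((αH ^ z) a))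
    (hρ : ∀ (z : ℤ) u, ρ ((αV ^ z) u) =
      TensorProduct.map (αV ^ z).toLinearMap (αH ^ z).toLinearMap (ρ u))
    (hyd : IsYetterDrinfeld k αH μ e Δ ε S p αV act ρ) (v : V) (a : H) :
    unRho p αH αV ρ (unAct αV act v a) = auxY (unAct αV act) (unAct αH μ) S (unRho p αH αV ρ v)
      (TensorProduct.map LinearMap.id (unRho 2 αH αH Δ) (unRho 2 αH αH Δ a)) := by
  have h1 : ∀ s : H ⊗[k] H, TensorProduct.map LinearMap.id (unRho 2 αH αH Δ)
      (TensorProduct.map (αH ^ (-1 : ℤ)).toLinearMap (αH ^ (1 - 2 : ℤ)).toLinearMap s) =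
      TensorProduct.map (αH ^ (-1 : ℤ)).toLinearMap (TensorProduct.map (αH ^ (-2 : ℤ)).toLinearMap
        (αH ^ (-2 : ℤ)).toLinearMap) (TensorProduct.map LinearMap.id Δ s) := by
    intro s
    induction s using TensorProduct.induction_on with
    | zero => simp
    | add x y hx hy => simp only [map_add, hx, hy]
    | tmul a b =>
      simp only [TensorProduct.map_tmul, LinearEquiv.coe_coe, LinearMap.id_apply, unRho_apply, hΔα]
      generalize Δ b = s
      induction s using TensorProduct.induction_on with
      | zero => simp
      | add x y hx hy => simp only [map_add, TensorProduct.tmul_add, hx, hy]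
      | tmul c d =>
        simp only [TensorProduct.map_tmul, LinearEquiv.coe_coe, aux_zz]
        ring_nf
  rw [unRho_apply 2 αH αH Δ a, h1, unAct_apply, unRho_apply, unRho_apply, hρ, hyd.2.2 v a]
  generalize TensorProduct.map LinearMap.id Δ (Δ a) = s
  generalize ρ v = t
  induction t using TensorProduct.induction_on with
  | zero => simp
  | add x y hx hy => simp only [map_add, TensorProduct.add_tmul, hx, hy, LinearMap.add_apply]
  | tmul v₀ v₁ =>
    induction s using TensorProduct.induction_on with
    | zero => simp
    | add x y hx hy => simp only [map_add, TensorProduct.tmul_add, hx, hy]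
    | tmul b s =>
      induction s using TensorProduct.induction_on with
      | zero => simp
      | add x y hx hy => simp only [map_add, TensorProduct.tmul_add, hx, hy]
      | tmul c d =>
        simp only [TensorProduct.map_tmul, LinearEquiv.coe_coe, aux_zz, aux_symm,
          TensorProduct.leftComm_tmul, TensorProduct.tensorTensorTensorComm_tmul,
          LinearMap.comp_apply, LinearMap.id_apply, TensorProduct.lift.tmul, unAct_apply,
          auxY_tmul, h, hμα, hSα]
        ring_nf

lemma unHopf (αH : H ≃ₗ[k] H) (μ : H →ₗ[k] H →ₗ[k] H) (e : H)
    (Δ : H →ₗ[k] H ⊗[k] H) (ε : H →ₗ[k] k) (S : H →ₗ[k] H)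
    (hH : IsHomHopf k αH μ e Δ ε S) :
    (∀ a b c, unAct αH μ a (unAct αH μ b c) = unAct αH μ (unAct αH μ a b) c) ∧
    (∀ a, unAct αH μ e a = a) ∧
    (∀ c, TensorProduct.lid k H (TensorProduct.map ε (LinearMap.id : H →ₗ[k] H)
      (unRho 2 αH αH Δ c)) = c) ∧
    (∀ h, TensorProduct.lift (unAct αH μ)
      (TensorProduct.map (LinearMap.id : H →ₗ[k] H) S (unRho 2 αH αH Δ h)) = ε h • e) := by
  obtain ⟨⟨⟨h1, h2, h3, h4, h5⟩, ⟨c1, c2, c3, c4, c5⟩, -⟩, s1, s2, s3⟩ := hH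
  have hμα := aux_zpow_act αH αH μ h1
  have hSα := aux_zpow αH αH S s1
  have hεα : ∀ x, ε ((αH ^ (-1 : ℤ)) x) = ε x := by
    intro x
    rw [← c2, aux_one αH, aux_zz]; simp
  have hinv : ∀ x, (αH ^ (-1 : ℤ)) (αH x) = x := by
    intro x
    rw [aux_one αH, aux_zz]; simp
  have he : (αH ^ (-2 : ℤ)) e = e := by
    rw [show (-2 : ℤ) = -1 + -1 by norm_num, ← aux_zz]
    have := hinv e
    rw [h3] at this
    rw [this, this]
  refine ⟨fun a b c => (unAct_assoc αH μ αH μ hμα (fun u a b => (h2 u a b).symm) a b c).symm,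
    fun a => ?_, fun c => ?_, fun h => ?_⟩
  · rw [unAct_apply, h4, hinv]
  · have : ∀ s : H ⊗[k] H, TensorProduct.lid k H (TensorProduct.map ε (LinearMap.id : H →ₗ[k] H)
        (TensorProduct.map (αH ^ (-1 : ℤ)).toLinearMap (αH ^ (1 - 2 : ℤ)).toLinearMap s)) =
        (αH ^ (-1 : ℤ)) (TensorProduct.lid k H
          (TensorProduct.map ε (LinearMap.id : H →ₗ[k] H) s)) := by
      intro s
      induction s using TensorProduct.induction_on with
      | zero => simp
      | add x y hx hy => simp only [map_add, hx, hy]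
      | tmul a b =>
        simp only [TensorProduct.map_tmul, LinearEquiv.coe_coe, hεα, LinearMap.id_apply,
          TensorProduct.lid_tmul, map_smul]
        norm_num
    rw [unRho_apply, this, c4, hinv]
  · have : ∀ s : H ⊗[k] H, TensorProduct.lift (unAct αH μ)
        (TensorProduct.map (LinearMap.id : H →ₗ[k] H) S
        (TensorProduct.map (αH ^ (-1 : ℤ)).toLinearMap (αH ^ (1 - 2 : ℤ)).toLinearMap s)) =
        (αH ^ (-2 : ℤ)) (TensorProduct.lift μ
          (TensorProduct.map (LinearMap.id : H →ₗ[k] H) S s)) := by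
      intro s
      induction s using TensorProduct.induction_on with
      | zero => simp
      | add x y hx hy => simp only [map_add, hx, hy]
      | tmul a b =>
        simp only [TensorProduct.map_tmul, LinearEquiv.coe_coe, LinearMap.id_apply,
          TensorProduct.lift.tmul, unAct_apply, hμα, hSα, aux_zz]
        norm_num
    rw [unRho_apply, this, s3, map_smul, he]

end Aux

/-- the Hom-Yang-Baxter equation for the braiding `τ` on `p`-th
right-right Yetter-Drinfeld modules. -/
theorem yd_homYangBaxter
    {H U V W : Type*} [AddCommGroup H] [Module k H] [AddCommGroup U] [Module k U]
    [AddCommGroup V] [Module k V] [AddCommGroup W] [Module k W]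
    (αH : H ≃ₗ[k] H) (μ : H →ₗ[k] H →ₗ[k] H) (e : H)
    (Δ : H →ₗ[k] H ⊗[k] H) (ε : H →ₗ[k] k) (S : H →ₗ[k] H)
    (hH : IsHomHopf k αH μ e Δ ε S) (i j p : ℤ)
    (αU : U ≃ₗ[k] U) (actU : U →ₗ[k] H →ₗ[k] U) (ρU : U →ₗ[k] U ⊗[k] H)
    (hU : IsYetterDrinfeld k αH μ e Δ ε S p αU actU ρU)
    (αV : V ≃ₗ[k] V) (actV : V →ₗ[k] H →ₗ[k] V) (ρV : V →ₗ[k] V ⊗[k] H)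
    (hV : IsYetterDrinfeld k αH μ e Δ ε S p αV actV ρV)
    (αW : W ≃ₗ[k] W) (actW : W →ₗ[k] H →ₗ[k] W) (ρW : W →ₗ[k] W ⊗[k] H)
    (hW : IsYetterDrinfeld k αH μ e Δ ε S p αW actW ρW) :
    TensorProduct.map (LinearMap.id : W →ₗ[k] W) (ydTau k p i j αH αU αV actU ρV)
        ∘ₗ (homAssoc k i j (Y := U) αW αV).toLinearMap
        ∘ₗ TensorProduct.map (ydTau k p i j αH αU αW actU ρW) (LinearMap.id : V →ₗ[k] V)
        ∘ₗ (homAssoc k i j (Y := W) αU αV).symm.toLinearMap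
        ∘ₗ TensorProduct.map (LinearMap.id : U →ₗ[k] U) (ydTau k p i j αH αV αW actV ρW)
        ∘ₗ (homAssoc k i j (Y := V) αU αW).toLinearMap
      = (homAssoc k i j (Y := V) αW αU).toLinearMap
        ∘ₗ TensorProduct.map (ydTau k p i j αH αV αW actV ρW) (LinearMap.id : U →ₗ[k] U)
        ∘ₗ (homAssoc k i j (Y := W) αV αU).symm.toLinearMap
        ∘ₗ TensorProduct.map (LinearMap.id : V →ₗ[k] V) (ydTau k p i j αH αU αW actU ρW)
        ∘ₗ (homAssoc k i j (Y := U) αV αW).toLinearMap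
        ∘ₗ TensorProduct.map (ydTau k p i j αH αU αV actU ρV) (LinearMap.id : W →ₗ[k] W) := by
  have hHopf := unHopf αH μ e Δ ε S hH
  obtain ⟨m1, m2, m3, m4⟩ := hHopf
  obtain ⟨⟨⟨h1, h2, h3, h4, h5⟩, ⟨c1, c2, c3, c4, c5⟩, -⟩, s1, s2, s3⟩ := hH
  have hμα := aux_zpow_act αH αH μ h1
  have hΔα := aux_zpow_rho αH αH Δ c1
  have hSα := aux_zpow αH αH S s1
  have hUα := aux_zpow_act αH αU actU hU.1.1
  have hVα := aux_zpow_act αH αV actV hV.1.1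
  have hVρ := aux_zpow_rho αH αV ρV hV.2.1.1
  have hWρ := aux_zpow_rho αH αW ρW hW.2.1.1
  exact aux_core i j αH (unAct αH μ) (unRho 2 αH αH Δ)
    (unAct_zpow αH αH μ hμα) (unRho_zpow 2 αH αH Δ hΔα)
    αU (unAct αU actU) (unAct_zpow αH αU actU hUα)
    (unAct_assoc αH μ αU actU hUα hU.1.2.2)
    αV (unAct αV actV) (unRho p αH αV ρV) (unAct_zpow αH αV actV hVα)
    (unRho_zpow p αH αV ρV hVρ)
    (aux_yd _ _ e _ ε S _ m1 m2 (unRho_coassoc 2 αH Δ αH Δ hΔα hΔα c3) m3 m4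
      (unYD p αH μ e Δ ε S αV actV ρV hμα hΔα hSα hVα hVρ hV))
    αW (unRho p αH αW ρW) (unRho_zpow p αH αW ρW hWρ)
    (unRho_coassoc p αH Δ αW ρW hΔα hWρ hW.2.1.2.1)
    _ _ _ (aux_tau p i j αH αU αV actU ρV hUα) (aux_tau p i j αH αU αW actU ρW hUα)
    (aux_tau p i j αH αV αW actV ρW hVα)
end
end
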